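/- arXiv:2402.11529 — 2 statements merged into one kernel-verified Lean document; each statement's English description precedes it below -/
import Mathlib

section
/- Let m ≥ 2 be an integer and let M, N be coprime integers with N odd and positive. Then lim_{t→0⁺} (m−1)·Σ_{k=0}^{∞} χ_{4(m−1)}(k)·e^{(2πiM/N − t)·k²/(8(m−1))} = −(1/(16(m−1)N²))·Σ_{k=0}^{4(m−1)N} k²·χ_{4(m−1)}(k)·e^{2πiMk²/(8(m−1)N)}. -/
open Finset

/-- The odd periodic function `χ_{4(m-1)}`. -/
def chiG (m : ℕ) (k : ℤ) : ℤ :=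
  if k % (4 * ((m : ℤ) - 1)) = (2 * (m : ℤ) - 3) % (4 * ((m : ℤ) - 1)) then 1
  else if k % (4 * ((m : ℤ) - 1)) = (2 * (m : ℤ) - 1) % (4 * ((m : ℤ) - 1)) then -1
  else 0

/-! At `t = 0` the summand is an odd function of `k` with period `L = 4(m-1)N`, so it has mean zero.
If `f` is `L`-periodic with mean zero and `h` is a smooth decaying cutoff, two summations by parts
give `∑ h(εk) f(k) = -h(0) L⁻¹ ∑_{j<L} j f(j) + ∑ (Δ_ε² h)(εk) G(k)` with `G` periodic, hence
bounded. Since `Δ_ε² h` is of size `ε² sup |h''|`, the last sum tends to `0` by dominated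
convergence. For odd `f`, the reflection `k ↦ L - k` turns `∑ j f(j)` into `L⁻¹ ∑ k² f(k)`; the
theorem is the case `h(x) = exp (-x²)` with `ε² = t / (8(m-1))`. -/

open Filter Topology
open scoped fwdDiff

section SummationByParts

variable {E : Type*} [AddCommGroup E]

lemma exists_periodic_fwdDiff_eq {f : ℕ → E} {L : ℕ} (hf : Function.Periodic f L)
    (hsum : ∑ k ∈ range L, f k = 0) (c : E) :
    ∃ F : ℕ → E, Function.Periodic F L ∧ F 0 = c ∧ Δ_[1] F = f := by
  refine ⟨fun n => c + ∑ k ∈ range n, f k, fun n => ?_, by simp, ?_⟩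
  · have hshift : ∑ k ∈ range n, f (L + k) = ∑ k ∈ range n, f k :=
      sum_congr rfl fun k _ => by rw [add_comm, hf]
    simp only [add_comm n L, sum_range_add, hsum, zero_add, hshift]
  · ext n
    simp only [fwdDiff, sum_range_succ]
    abel

lemma sum_range_succ_eq_sub_sum_fwdDiff (F : ℕ → E) (n : ℕ) :
    ∑ j ∈ range n, F (j + 1) = n • F n - ∑ j ∈ range n, j • Δ_[1] F j := by
  induction n with
  | zero => simp
  | succ n ih =>
    rw [sum_range_succ, sum_range_succ, ih]
    simp only [fwdDiff]
    module

end SummationByParts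

section TsumByParts

variable {E : Type*} [NormedAddCommGroup E]

lemma exists_norm_le_of_periodic {f : ℕ → E} {L : ℕ} (hL : 0 < L) (hf : Function.Periodic f L) :
    ∃ C : ℝ, ∀ n, ‖f n‖ ≤ C := by
  refine ⟨∑ k ∈ range L, ‖f k‖, fun n => ?_⟩
  rw [← hf.map_mod_nat n]
  exact single_le_sum (f := fun k => ‖f k‖) (fun _ _ => norm_nonneg _)
    (mem_range.2 (Nat.mod_lt n hL))

variable [NormedSpace ℝ E] [CompleteSpace E]

lemma summable_smul_of_norm_le {F : ℕ → E} {C : ℝ} (hF : ∀ n, ‖F n‖ ≤ C) {g : ℕ → ℝ}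
    (hg : Summable g) : Summable fun n => g n • F n :=
  .of_norm_bounded (hg.norm.mul_right C) fun n => by
    rw [norm_smul]
    exact mul_le_mul_of_nonneg_left (hF n) (norm_nonneg _)

lemma tsum_smul_fwdDiff {F : ℕ → E} {C : ℝ} (hF : ∀ n, ‖F n‖ ≤ C) {g : ℕ → ℝ} (hg : Summable g) :
    ∑' k, g k • Δ_[1] F k = -(g 0 • F 0) - ∑' k, Δ_[1] g k • F (k + 1) := by
  have hgF : Summable fun k => g k • F k := summable_smul_of_norm_le hF hg
  have hgF' : Summable fun k => g k • F (k + 1) := summable_smul_of_norm_le (fun k => hF _) hg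
  have hgF'' : Summable fun k => g (k + 1) • F (k + 1) := (summable_nat_add_iff 1).2 hgF
  simp only [fwdDiff, smul_sub, sub_smul]
  rw [hgF'.tsum_sub hgF, hgF''.tsum_sub hgF', hgF.tsum_eq_zero_add]
  abel

/- Choosing the constant of summation of the primitive `F` so that `k ↦ F (k + 1)` has mean zero
makes a second summation by parts possible. -/
lemma exists_tsum_smul_eq_tsum_fwdDiff_fwdDiff {f : ℕ → E} {L : ℕ} (hL : 0 < L)
    (hf : Function.Periodic f L) (hsum : ∑ k ∈ range L, f k = 0) :
    ∃ (G : ℕ → E) (D : ℝ), (∀ n, ‖G n‖ ≤ D) ∧ ∀ g : ℕ → ℝ, Summable g →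
      ∑' k, g k • f k = -(g 0 • (L : ℝ)⁻¹ • ∑ j ∈ range L, (j : ℝ) • f j) +
        ∑' k, Δ_[1] (Δ_[1] g) k • G k := by
  obtain ⟨F, hF, hF0, hΔF⟩ :=
    exists_periodic_fwdDiff_eq hf hsum ((L : ℝ)⁻¹ • ∑ j ∈ range L, (j : ℝ) • f j)
  have hFsum : ∑ j ∈ range L, F (j + 1) = 0 := by
    rw [sum_range_succ_eq_sub_sum_fwdDiff, hΔF, hF.eq, hF0, ← Nat.cast_smul_eq_nsmul ℝ,
      smul_inv_smul₀ (by positivity)]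
    simp only [Nat.cast_smul_eq_nsmul, sub_self]
  have hF' : Function.Periodic (fun k => F (k + 1)) L := fun k => by
    simp only [add_right_comm k L 1, hF (k + 1)]
  obtain ⟨G, hG, hG0, hΔG⟩ := exists_periodic_fwdDiff_eq hF' hFsum 0
  obtain ⟨C, hC⟩ := exists_norm_le_of_periodic hL hF
  obtain ⟨D, hD⟩ := exists_norm_le_of_periodic hL hG
  refine ⟨fun k => G (k + 1), D, fun n => hD _, fun g hg => ?_⟩
  have hΔg : Summable (Δ_[1] g) := ((summable_nat_add_iff 1).2 hg).sub hg
  have hfirst := tsum_smul_fwdDiff hC hg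
  have hsecond := tsum_smul_fwdDiff hD hΔg
  rw [hΔF, hF0] at hfirst
  rw [hΔG, hG0, smul_zero, neg_zero, zero_sub] at hsecond
  rw [hfirst, hsecond, sub_neg_eq_add]

end TsumByParts

section SecondDifferences

variable {F : Type*} [NormedAddCommGroup F] [NormedSpace ℝ F]

lemma norm_fwdDiff_le {f f' : ℝ → F} {x ε C : ℝ} (hε : 0 ≤ ε)
    (hf : ∀ y, x ≤ y → HasDerivAt f (f' y) y) (hC : ∀ y, x ≤ y → ‖f' y‖ ≤ C) :
    ‖Δ_[ε] f x‖ ≤ C * ε := by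
  have hmv := (convex_Ici x).norm_image_sub_le_of_norm_hasDerivWithin_le
    (fun y hy => (hf y hy).hasDerivWithinAt) hC Set.self_mem_Ici
    (Set.mem_Ici.2 (le_add_of_nonneg_right hε))
  rwa [add_sub_cancel_left, Real.norm_of_nonneg hε] at hmv

lemma norm_fwdDiff_fwdDiff_le {f f' f'' : ℝ → F} {x ε C : ℝ} (hε : 0 ≤ ε)
    (hf : ∀ y, x ≤ y → HasDerivAt f (f' y) y) (hf' : ∀ y, x ≤ y → HasDerivAt f' (f'' y) y)
    (hC : ∀ y, x ≤ y → ‖f'' y‖ ≤ C) :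
    ‖Δ_[ε] (Δ_[ε] f) x‖ ≤ C * ε ^ 2 := by
  have hΔf (y : ℝ) (hy : x ≤ y) : HasDerivAt (Δ_[ε] f) (Δ_[ε] f' y) y :=
    ((hf _ (by linarith)).comp_add_const y ε).sub (hf y hy)
  have hΔf' (y : ℝ) (hy : x ≤ y) : ‖Δ_[ε] f' y‖ ≤ C * ε :=
    norm_fwdDiff_le hε (fun z hz => hf' z (hy.trans hz)) fun z hz => hC z (hy.trans hz)
  calc ‖Δ_[ε] (Δ_[ε] f) x‖ ≤ C * ε * ε := norm_fwdDiff_le hε hΔf hΔf'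
    _ = C * ε ^ 2 := by ring

end SecondDifferences

lemma fwdDiff_one_comp_mul_natCast {G : Type*} [AddCommGroup G] (h : ℝ → G) (ε : ℝ) :
    Δ_[1] (fun k : ℕ => h (ε * k)) = fun k : ℕ => Δ_[ε] h (ε * k) := by
  ext k
  simp only [fwdDiff, Nat.cast_add, Nat.cast_one, mul_add, mul_one]

lemma summable_inv_one_add_natCast_sq : Summable fun k : ℕ => (1 + (k : ℝ) ^ 2)⁻¹ := by
  refine (summable_nat_add_iff 1).1 (((summable_nat_add_iff 1).2
    (Real.summable_nat_pow_inv.2 one_lt_two)).of_nonneg_of_le (fun k => by positivity) fun k => ?_)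
  gcongr
  exact le_add_of_nonneg_left zero_le_one

section SmoothCutoff

variable {h h' h'' : ℝ → ℝ} {K : ℝ}

lemma norm_fwdDiff_fwdDiff_mul_natCast_le (hh : ∀ x, HasDerivAt h (h' x) x)
    (hh' : ∀ x, HasDerivAt h' (h'' x) x) (hK : ∀ x, |h'' x| ≤ K * (1 + x ^ 2)⁻¹)
    {ε : ℝ} (hε : 0 ≤ ε) (hε1 : ε ≤ 1) (k : ℕ) :
    ‖Δ_[ε] (Δ_[ε] h) (ε * k)‖ ≤ K * (1 + (k : ℝ) ^ 2)⁻¹ := by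
  have hK0 : 0 ≤ K := by simpa using (abs_nonneg _).trans (hK 0)
  have hbound (y : ℝ) (hy : ε * k ≤ y) : ‖h'' y‖ ≤ K * (1 + (ε * k) ^ 2)⁻¹ :=
    (hK y).trans (by gcongr)
  have hscale : (1 + (ε * k) ^ 2)⁻¹ * ε ^ 2 ≤ (1 + (k : ℝ) ^ 2)⁻¹ := by
    rw [inv_mul_le_iff₀ (by positivity), ← div_eq_mul_inv, le_div_iff₀ (by positivity)]
    nlinarith [pow_le_one₀ (n := 2) hε hε1]
  calc ‖Δ_[ε] (Δ_[ε] h) (ε * k)‖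
      ≤ K * (1 + (ε * k) ^ 2)⁻¹ * ε ^ 2 :=
        norm_fwdDiff_fwdDiff_le hε (fun y _ => hh y) (fun y _ => hh' y) hbound
    _ ≤ K * (1 + (k : ℝ) ^ 2)⁻¹ := by
        rw [mul_assoc]
        exact mul_le_mul_of_nonneg_left hscale hK0

variable {E : Type*} [NormedAddCommGroup E] [NormedSpace ℝ E] [CompleteSpace E]

lemma tendsto_tsum_fwdDiff_fwdDiff_smul (hh : ∀ x, HasDerivAt h (h' x) x)
    (hh' : ∀ x, HasDerivAt h' (h'' x) x) (hK : ∀ x, |h'' x| ≤ K * (1 + x ^ 2)⁻¹)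
    {G : ℕ → E} {D : ℝ} (hG : ∀ n, ‖G n‖ ≤ D) :
    Tendsto (fun ε : ℝ => ∑' k : ℕ, Δ_[ε] (Δ_[ε] h) (ε * k) • G k) (𝓝[>] 0) (𝓝 0) := by
  have hK0 : 0 ≤ K := by simpa using (abs_nonneg _).trans (hK 0)
  rw [← tsum_zero (α := E) (β := ℕ)]
  refine tendsto_tsum_of_dominated_convergence
    ((summable_inv_one_add_natCast_sq.mul_left K).mul_right D) (fun k => ?_) ?_
  · have hcont : Continuous h := continuous_iff_continuousAt.2 fun x => (hh x).continuousAt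
    have hlim : Continuous fun ε : ℝ => Δ_[ε] (Δ_[ε] h) (ε * k) • G k := by
      simp only [fwdDiff]
      fun_prop
    simpa [fwdDiff] using (hlim.tendsto 0).mono_left nhdsWithin_le_nhds
  · filter_upwards [Ioc_mem_nhdsGT zero_lt_one] with ε hε k
    rw [norm_smul]
    exact mul_le_mul (norm_fwdDiff_fwdDiff_mul_natCast_le hh hh' hK hε.1.le hε.2 k) (hG k)
      (norm_nonneg _) (by positivity)

theorem tendsto_tsum_smul_of_periodic (hh : ∀ x, HasDerivAt h (h' x) x)
    (hh' : ∀ x, HasDerivAt h' (h'' x) x) (hK : ∀ x, |h'' x| ≤ K * (1 + x ^ 2)⁻¹)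
    (hsummable : ∀ ε > 0, Summable fun k : ℕ => h (ε * k))
    {f : ℕ → E} {L : ℕ} (hL : 0 < L) (hf : Function.Periodic f L)
    (hsum : ∑ k ∈ range L, f k = 0) :
    Tendsto (fun ε : ℝ => ∑' k : ℕ, h (ε * k) • f k) (𝓝[>] 0)
      (𝓝 (-(h 0 • (L : ℝ)⁻¹ • ∑ j ∈ range L, (j : ℝ) • f j))) := by
  obtain ⟨G, D, hG, hparts⟩ := exists_tsum_smul_eq_tsum_fwdDiff_fwdDiff hL hf hsum
  have hlim := (tendsto_tsum_fwdDiff_fwdDiff_smul hh hh' hK hG).const_add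
    (-(h 0 • (L : ℝ)⁻¹ • ∑ j ∈ range L, (j : ℝ) • f j))
  rw [add_zero] at hlim
  refine hlim.congr' ?_
  filter_upwards [self_mem_nhdsWithin] with ε hε
  rw [hparts _ (hsummable ε hε), fwdDiff_one_comp_mul_natCast, fwdDiff_one_comp_mul_natCast,
    Nat.cast_zero, mul_zero]

end SmoothCutoff

section OddPeriodic

variable {E : Type*} [AddCommGroup E] [Module ℝ E] {f : ℤ → E} {L : ℕ}

lemma sum_range_smul_eq_neg_sum_range_smul_of_odd_periodic (hodd : f.Odd)
    (hf : Function.Periodic f L) (w : ℝ → ℝ) :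
    ∑ k ∈ range (L + 1), w k • f k = -∑ k ∈ range (L + 1), w (L - k) • f k := by
  rw [← sum_range_reflect, ← sum_neg_distrib]
  refine sum_congr rfl fun j hj => ?_
  have hjL : j ≤ L := mem_range_succ_iff.1 hj
  rw [Nat.add_sub_cancel, Nat.cast_sub hjL, Nat.cast_sub hjL, hf.sub_eq', hodd, smul_neg]

lemma sum_range_succ_smul_of_odd_periodic (hodd : f.Odd) (hf : Function.Periodic f L)
    (w : ℝ → ℝ) : ∑ k ∈ range (L + 1), w k • f k = ∑ k ∈ range L, w k • f k := by
  have : IsAddTorsionFree E := .of_isTorsionFree ℝ E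
  rw [sum_range_succ, hf.eq, hodd.map_zero, smul_zero, add_zero]

lemma sum_range_eq_zero_of_odd_periodic (hodd : f.Odd) (hf : Function.Periodic f L) :
    ∑ k ∈ range L, f k = 0 := by
  have hreflect := sum_range_smul_eq_neg_sum_range_smul_of_odd_periodic hodd hf fun _ => 1
  rw [sum_range_succ_smul_of_odd_periodic hodd hf fun _ => 1] at hreflect
  simp only [one_smul] at hreflect
  have : IsAddTorsionFree E := .of_isTorsionFree ℝ E
  exact self_eq_neg.1 hreflect

lemma sum_range_sq_smul_of_odd_periodic (hodd : f.Odd) (hf : Function.Periodic f L) :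
    ∑ k ∈ range (L + 1), (k : ℝ) ^ 2 • f k = (L : ℝ) • ∑ k ∈ range L, (k : ℝ) • f k := by
  have hreflect := sum_range_smul_eq_neg_sum_range_smul_of_odd_periodic hodd hf fun x => x ^ 2
  have hexpand : ∑ k ∈ range (L + 1), ((L : ℝ) - k) ^ 2 • f k =
      (L : ℝ) ^ 2 • ∑ k ∈ range L, f k - (2 * L : ℝ) • ∑ k ∈ range L, (k : ℝ) • f k +
        ∑ k ∈ range (L + 1), (k : ℝ) ^ 2 • f k := by
    rw [sum_range_succ_smul_of_odd_periodic hodd hf fun x => (L - x) ^ 2,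
      sum_range_succ_smul_of_odd_periodic hodd hf fun x => x ^ 2, smul_sum, smul_sum,
      ← sum_sub_distrib, ← sum_add_distrib]
    exact sum_congr rfl fun k _ => by module
  rw [hexpand, sum_range_eq_zero_of_odd_periodic hodd hf] at hreflect
  linear_combination (norm := module) (1 / 2 : ℝ) • hreflect

end OddPeriodic

section GaussianCutoff

lemma hasDerivAt_exp_neg_sq (x : ℝ) :
    HasDerivAt (fun x : ℝ => Real.exp (-x ^ 2)) (-2 * x * Real.exp (-x ^ 2)) x := by
  refine (hasDerivAt_pow 2 x).fun_neg.exp.congr_deriv ?_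
  ring

lemma hasDerivAt_mul_exp_neg_sq (x : ℝ) :
    HasDerivAt (fun x : ℝ => -2 * x * Real.exp (-x ^ 2))
      ((4 * x ^ 2 - 2) * Real.exp (-x ^ 2)) x := by
  refine (((hasDerivAt_id' x).const_mul (-2)).mul (hasDerivAt_exp_neg_sq x)).congr_deriv ?_
  ring

lemma abs_mul_exp_neg_sq_le (x : ℝ) :
    |(4 * x ^ 2 - 2) * Real.exp (-x ^ 2)| ≤ 8 * (1 + x ^ 2)⁻¹ := by
  have hexp : (1 + x ^ 2) ^ 2 ≤ 2 * Real.exp (x ^ 2) := by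
    nlinarith [Real.quadratic_le_exp_of_nonneg (sq_nonneg x)]
  have hpoly : |4 * x ^ 2 - 2| ≤ 4 * (1 + x ^ 2) :=
    abs_le.2 ⟨by nlinarith, by nlinarith⟩
  rw [abs_mul, Real.abs_exp, Real.exp_neg, ← div_eq_mul_inv, ← div_eq_mul_inv,
    div_le_div_iff₀ (Real.exp_pos _) (by positivity)]
  calc |4 * x ^ 2 - 2| * (1 + x ^ 2) ≤ 4 * (1 + x ^ 2) * (1 + x ^ 2) := by gcongr
    _ ≤ 8 * Real.exp (x ^ 2) := by linarith

lemma summable_exp_neg_sq_mul_natCast {ε : ℝ} (hε : 0 < ε) :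
    Summable fun k : ℕ => Real.exp (-(ε * k) ^ 2) := by
  have hsq (k : ℕ) : (k : ℝ) ≤ (k : ℝ) ^ 2 := mod_cast Nat.le_self_pow two_ne_zero k
  refine (Real.summable_exp_nat_mul_of_ge (neg_lt_zero.2 (pow_pos hε 2)) hsq).congr fun k => ?_
  rw [mul_pow, neg_mul]

theorem tendsto_tsum_exp_neg_mul_sq_smul_of_odd_periodic {E : Type*} [NormedAddCommGroup E]
    [NormedSpace ℝ E] [CompleteSpace E] {f : ℤ → E} {L : ℕ} (hL : 0 < L) (hodd : f.Odd)
    (hf : Function.Periodic f L) :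
    Tendsto (fun s : ℝ => ∑' k : ℕ, Real.exp (-(s * (k : ℝ) ^ 2)) • f k) (𝓝[>] 0)
      (𝓝 (-(((L : ℝ) ^ 2)⁻¹ • ∑ k ∈ range (L + 1), (k : ℝ) ^ 2 • f k))) := by
  have hfℕ : Function.Periodic (fun k : ℕ => f k) L := fun k => by
    simp only [Nat.cast_add, hf (k : ℤ)]
  have hlim := tendsto_tsum_smul_of_periodic hasDerivAt_exp_neg_sq hasDerivAt_mul_exp_neg_sq
    abs_mul_exp_neg_sq_le (fun _ => summable_exp_neg_sq_mul_natCast) hL hfℕ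
    (sum_range_eq_zero_of_odd_periodic hodd hf)
  have hsqrt : Tendsto Real.sqrt (𝓝[>] 0) (𝓝[>] 0) := by
    refine tendsto_nhdsWithin_iff.2 ⟨?_, ?_⟩
    · simpa using (Real.continuous_sqrt.tendsto 0).mono_left nhdsWithin_le_nhds
    · filter_upwards [self_mem_nhdsWithin] with s hs using Real.sqrt_pos.2 hs
  have hvalue : ((L : ℝ) ^ 2)⁻¹ • ∑ k ∈ range (L + 1), (k : ℝ) ^ 2 • f k =
      Real.exp (-0 ^ 2) • (L : ℝ)⁻¹ • ∑ k ∈ range L, (k : ℝ) • f k := by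
    have hL0 : (L : ℝ) ≠ 0 := mod_cast hL.ne'
    rw [sum_range_sq_smul_of_odd_periodic hodd hf, zero_pow two_ne_zero, neg_zero, Real.exp_zero,
      one_smul, smul_smul, sq, mul_inv, inv_mul_cancel_right₀ hL0]
  rw [hvalue]
  refine (hlim.comp hsqrt).congr' ?_
  filter_upwards [self_mem_nhdsWithin] with s hs
  simp only [Function.comp_apply, mul_pow, Real.sq_sqrt (Set.mem_Ioi.1 hs).le]

end GaussianCutoff

section TwistedCharacter

lemma chiG_periodic (m : ℕ) : Function.Periodic (chiG m) (4 * ((m : ℤ) - 1)) := fun k => by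
  simp only [chiG, Int.add_emod_right]

lemma chiG_odd (m : ℕ) : (chiG m).Odd := fun k => by
  have hneg_iff (a b : ℤ) (hab : a + b = 4 * ((m : ℤ) - 1)) :
      -k % (4 * ((m : ℤ) - 1)) = a % (4 * ((m : ℤ) - 1)) ↔
        k % (4 * ((m : ℤ) - 1)) = b % (4 * ((m : ℤ) - 1)) := by
    have hsub : k - b = -(-k - a) - (4 * ((m : ℤ) - 1)) := by linarith
    rw [← Int.ModEq, ← Int.ModEq, Int.modEq_comm, Int.modEq_comm (a := k), Int.modEq_iff_dvd,
      Int.modEq_iff_dvd, hsub, dvd_sub_self_right, dvd_neg]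
  have hne : (2 * (m : ℤ) - 3) % (4 * ((m : ℤ) - 1)) ≠ (2 * (m : ℤ) - 1) % (4 * ((m : ℤ) - 1)) := by
    intro heq
    obtain ⟨c, hc⟩ := Int.ModEq.dvd heq
    have h4 : (4 : ℤ) ∣ 2 := ⟨((m : ℤ) - 1) * c, by linarith⟩
    norm_num at h4
  simp only [chiG, hneg_iff (2 * m - 3) (2 * m - 1) (by ring),
    hneg_iff (2 * m - 1) (2 * m - 3) (by ring)]
  split_ifs <;> simp_all

lemma exp_quadratic_periodic (M : ℤ) {L : ℕ} (hL : Even L) :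
    Function.Periodic
      (fun k : ℤ => Complex.exp (2 * Real.pi * Complex.I * M * (k : ℂ) ^ 2 / (2 * L))) L := by
  obtain ⟨r, rfl⟩ := hL
  intro k
  rcases eq_or_ne r 0 with rfl | hr
  · simp
  refine Complex.exp_eq_exp_iff_exists_int.2 ⟨M * (k + r), ?_⟩
  push_cast
  field_simp
  ring

/-- The summand `χ_{4(m-1)}(k) e^{2πiMk²/(8(m-1)N)}` of the series at `t = 0`. -/
noncomputable def chiGExp (m : ℕ) (M : ℤ) (N : ℕ) (k : ℤ) : ℂ :=
  (chiG m k : ℂ) *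
    Complex.exp (2 * Real.pi * Complex.I * M * (k : ℂ) ^ 2 / (8 * ((m : ℂ) - 1) * N))

lemma chiGExp_odd (m : ℕ) (M : ℤ) (N : ℕ) : (chiGExp m M N).Odd := fun k => by
  simp only [chiGExp, chiG_odd m k, Int.cast_neg, neg_sq, neg_mul]

lemma chiGExp_periodic {m : ℕ} (hm : 1 ≤ m) (M : ℤ) (N : ℕ) :
    Function.Periodic (chiGExp m M N) (4 * (m - 1) * N : ℕ) := by
  have heven : Even (4 * (m - 1) * N) := ⟨2 * (m - 1) * N, by ring⟩
  have hchi : Function.Periodic (chiG m) (4 * (m - 1) * N : ℕ) := by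
    have hcast : ((4 * (m - 1) * N : ℕ) : ℤ) = N * (4 * ((m : ℤ) - 1)) := by
      push_cast [hm]
      ring
    exact hcast ▸ (chiG_periodic m).nat_mul N
  have hden : 8 * ((m : ℂ) - 1) * N = 2 * (4 * (m - 1) * N : ℕ) := by
    push_cast [hm]
    ring
  intro k
  have hexp := exp_quadratic_periodic M heven k
  simp only [chiGExp, hden, hchi k, hexp]

lemma chiG_mul_exp_sub_eq_exp_smul_chiGExp {m N : ℕ} (M : ℤ) (hm : m ≠ 1) (hN : N ≠ 0) (t : ℝ)
    (k : ℕ) :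
    (chiG m k : ℂ) * Complex.exp ((2 * Real.pi * Complex.I * M / N - t) *
        ((k : ℂ) ^ 2 / (8 * ((m : ℂ) - 1)))) =
      Real.exp (-(t * (8 * ((m : ℝ) - 1))⁻¹ * (k : ℝ) ^ 2)) • chiGExp m M N k := by
  have hm' : (m : ℂ) - 1 ≠ 0 := sub_ne_zero.2 (mod_cast hm)
  rw [chiGExp, Complex.real_smul, Complex.ofReal_exp, mul_left_comm, ← Complex.exp_add]
  congr 2
  push_cast
  field_simp
  ring

end TwistedCharacter

theorem stmt12_general (m : ℕ) (hm : 2 ≤ m) (M : ℤ) (N : ℕ) (hN : 0 < N) :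
    Filter.Tendsto
      (fun t : ℝ => ((m : ℂ) - 1) *
        ∑' k : ℕ, (chiG m k : ℂ) *
          Complex.exp ((2 * Real.pi * Complex.I * M / N - t) *
            ((k : ℂ) ^ 2 / (8 * ((m : ℂ) - 1)))))
      (nhdsWithin 0 (Set.Ioi 0))
      (nhds (-(1 / (16 * ((m : ℂ) - 1) * (N : ℂ) ^ 2)) *
        ∑ k ∈ Finset.range (4 * (m - 1) * N + 1),
          (k : ℂ) ^ 2 * (chiG m k : ℂ) *
            Complex.exp (2 * Real.pi * Complex.I * M * (k : ℂ) ^ 2 /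
              (8 * ((m : ℂ) - 1) * N)))) := by
  have hm1 : (0 : ℝ) < m - 1 := sub_pos.2 (mod_cast hm)
  have hL : 0 < 4 * (m - 1) * N := by
    have : 0 < m - 1 := by omega
    positivity
  have hscale : Tendsto (fun t : ℝ => t * (8 * ((m : ℝ) - 1))⁻¹) (𝓝[>] 0) (𝓝[>] 0) := by
    simpa only [zero_mul, id_eq] using TendstoNhdsWithinIoi.mul_const
      (inv_pos.2 (mul_pos (by norm_num) hm1) : 0 < (8 * ((m : ℝ) - 1))⁻¹)
      (tendsto_id (x := 𝓝[>] (0 : ℝ)))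
  have hlim := ((tendsto_tsum_exp_neg_mul_sq_smul_of_odd_periodic hL (chiGExp_odd m M N)
    (chiGExp_periodic (by omega) M N)).comp hscale).const_mul ((m : ℂ) - 1)
  convert hlim using 2 with t
  · simp only [Function.comp_apply,
      chiG_mul_exp_sub_eq_exp_smul_chiGExp M (by omega : m ≠ 1) hN.ne' t]
  · have hcoeff : ((m : ℂ) - 1) * ((4 * ((m : ℂ) - 1) * N) ^ 2)⁻¹ =
        1 / (16 * ((m : ℂ) - 1) * (N : ℂ) ^ 2) := by
      have hm1' : (m : ℂ) - 1 ≠ 0 := mod_cast hm1.ne'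
      field_simp
      ring
    simp only [chiGExp, Complex.real_smul]
    push_cast [show 1 ≤ m by omega]
    rw [mul_neg, ← mul_assoc, hcoeff, neg_mul]
    simp only [mul_assoc]

theorem stmt12 (m : ℕ) (hm : 2 ≤ m) (M : ℤ) (N : ℕ) (hN : 0 < N) (hNodd : Odd N)
    (hMN : IsCoprime M (N : ℤ)) :
    Filter.Tendsto
      (fun t : ℝ => ((m : ℂ) - 1) *
        ∑' k : ℕ, (chiG m k : ℂ) *
          Complex.exp ((2 * Real.pi * Complex.I * M / N - t) *
            ((k : ℂ) ^ 2 / (8 * ((m : ℂ) - 1)))))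
      (nhdsWithin 0 (Set.Ioi 0))
      (nhds (-(1 / (16 * ((m : ℂ) - 1) * (N : ℂ) ^ 2)) *
        ∑ k ∈ Finset.range (4 * (m - 1) * N + 1),
          (k : ℂ) ^ 2 * (chiG m k : ℂ) *
            Complex.exp (2 * Real.pi * Complex.I * M * (k : ℂ) ^ 2 /
              (8 * ((m : ℂ) - 1) * N)))) :=
  stmt12_general m hm M N hN
end

section
/- Let m ≥ 2 be an integer and let M, N be coprime integers with N odd and positive, and set ζ = e^{2πiM/N}. Then U_{m,N}(ζ) = −(1/(16(m−1)N²))·e^{−2πiM(2m−3)²/(8(m−1)N)}·Σ_{k=0}^{4(m−1)N} k²·χ_{4(m−1)}(k)·e^{2πiMk²/(8(m−1)N)}. -/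
open Finset

/-- The q-Pochhammer symbol `(x;q)_n = ∏_{j=0}^{n-1} (1 - x q^j)`. -/
noncomputable def qPoch (x q : ℂ) (n : ℕ) : ℂ := ∏ j ∈ Finset.range n, (1 - x * q ^ j)

/-- The Gaussian binomial coefficient `[n choose k]_q`. -/
noncomputable def qBinom (q : ℂ) (n k : ℕ) : ℂ :=
  if k ≤ n then qPoch q q n / (qPoch q q (n - k) * qPoch q q k) else 0

/-- Extend a tuple `g : Fin k → ℕ` to `ℕ → ℕ` by zero. -/
def pad (k : ℕ) (g : Fin k → ℕ) : ℕ → ℕ := fun j => if h : j < k then g ⟨j, h⟩ else 0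

/-- The general term of the multi-sum `G_m(q)`: here `n j` denotes `n_{j+1}` (0-based indexing),
so `n (m-2)` is `n_{m-1}` and `n 0` is `n_1`. -/
noncomputable def Gterm (m : ℕ) (q : ℂ) (n : ℕ → ℕ) : ℂ :=
  (-1) ^ (n (m - 2)) *
    q ^ (n (m - 2) * (n (m - 2) + 1) +
        ∑ j ∈ Finset.range (m - 2), (2 * (n j) ^ 2 + 2 * n j)) *
    qPoch q (q ^ 2) (n 0) / qPoch (-q) q (2 * n 0 + 1) *
    ∏ i ∈ Finset.range (m - 2), qBinom (q ^ 2) (n (i + 1)) (n i)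

/-- The multi-sum `G_m(q)`. -/
noncomputable def G (m : ℕ) (q : ℂ) : ℂ := ∑' n : Fin (m - 1) → ℕ, Gterm m q (pad (m - 1) n)

/-- The truncated multi-sum `U_{m,N}(q)`. -/
noncomputable def U (m N : ℕ) (q : ℂ) : ℂ :=
  ∑ n ∈ Fintype.piFinset (fun _ : Fin (m - 1) => Finset.range N), Gterm m q (pad (m - 1) n)

/-!
Write `m = e + 2`. The summand of `U` is built from a Bailey pair relative to `q²` by `e` steps of
the Bailey chain, so for `|q| < 1` the multi-sum becomes `∑_{r < N} θ_r(q) γ_r(q)`, where `θ_r` is a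
difference of two powers of `q` and `γ_r` is a truncated conjugate Bailey sequence. A telescoping
certificate shows that `γ_0 - γ_r` is a sum of terms that are regular at a primitive `N`-th root of
unity `ζ`, whereas `γ_0` has a simple pole there. The reflection `r ↦ N - 1 - r` changes the sign of
`θ_r(ζ)` and fixes the sum of the certificates, so `∑ θ_r` vanishes at `ζ` and the regular terms
contribute nothing. Hence, as `q → ζ`, only the residue of `γ_0` times the derivative of `∑ θ_r`
survives. Differentiation multiplies `q^a` by `a`; since `8(e + 1)a + (2e + 1)² = k²` for the
integers `k` supporting the character, this produces the factor `k²`.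
-/

section QPochhammer

lemma qPoch_zero (x p : ℂ) : qPoch x p 0 = 1 := by simp [qPoch]

lemma qPoch_succ (x p : ℂ) (n : ℕ) : qPoch x p (n + 1) = qPoch x p n * (1 - x * p ^ n) := by
  simp [qPoch, prod_range_succ]

lemma qPoch_add (x p : ℂ) (m n : ℕ) :
    qPoch x p (m + n) = qPoch x p m * qPoch (x * p ^ m) p n := by
  simp only [qPoch, prod_range_add, pow_add, mul_assoc]

lemma qPoch_succ' (x p : ℂ) (n : ℕ) : qPoch x p (n + 1) = (1 - x) * qPoch (x * p) p n := by
  rw [add_comm, qPoch_add, qPoch_succ, qPoch_zero, pow_zero, pow_one, one_mul, mul_one]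

lemma qPoch_ne_zero_iff {x p : ℂ} {n : ℕ} : qPoch x p n ≠ 0 ↔ ∀ j < n, x * p ^ j ≠ 1 := by
  simp only [qPoch, prod_ne_zero_iff, mem_range, sub_ne_zero, ne_eq, @eq_comm ℂ 1]

lemma qPoch_self_ne_zero {p : ℂ} (hp : ¬IsOfFinOrder p) (n : ℕ) : qPoch p p n ≠ 0 := by
  refine qPoch_ne_zero_iff.2 fun j _ h ↦ hp (isOfFinOrder_iff_pow_eq_one.2 ⟨j + 1, j.succ_pos, ?_⟩)
  rwa [pow_succ']

lemma qPoch_mul_self_ne_zero {p : ℂ} (hp : ¬IsOfFinOrder p) (n : ℕ) : qPoch (p * p) p n ≠ 0 :=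
  right_ne_zero_of_mul (qPoch_succ' p p n ▸ qPoch_self_ne_zero hp (n + 1))

lemma qPoch_self_ne_zero_of_isPrimitiveRoot {ω : ℂ} {N : ℕ} (hω : IsPrimitiveRoot ω N) {n : ℕ}
    (hn : n < N) : qPoch ω ω n ≠ 0 := by
  refine qPoch_ne_zero_iff.2 fun j hj h ↦ ?_
  rw [← pow_succ'] at h
  exact hω.pow_ne_one_of_pos_of_lt j.succ_ne_zero (by omega) h

lemma qPoch_self_of_isPrimitiveRoot {ω : ℂ} {n : ℕ} (hω : IsPrimitiveRoot ω (n + 1)) :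
    qPoch ω ω n = n + 1 := by
  simp only [qPoch, ← pow_succ', hω.prod_one_sub_pow_eq_order]

lemma qPoch_neg_self_ne_zero {ζ : ℂ} {N : ℕ} (hN : Odd N) (hζ : ζ ^ N = 1) (n : ℕ) :
    qPoch (-ζ) ζ n ≠ 0 := by
  refine qPoch_ne_zero_iff.2 fun j _ h ↦ ?_
  rw [neg_mul, ← pow_succ', neg_eq_iff_eq_neg] at h
  have hpow : (ζ ^ (j + 1)) ^ N = 1 := by rw [pow_right_comm, hζ, one_pow]
  rw [h, hN.neg_one_pow] at hpow
  norm_num at hpow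

lemma qPoch_sq_sq_odd (q : ℂ) (n : ℕ) :
    qPoch (q ^ 2) (q ^ 2) (2 * n + 1) =
      qPoch q (q ^ 2) (n + 1) * qPoch (q ^ 2) (q ^ 2) n * qPoch (-q) q (2 * n + 1) := by
  induction n with
  | zero => simp only [qPoch, mul_zero, zero_add, prod_range_one, prod_range_zero]; ring
  | succ n ih =>
    rw [show 2 * (n + 1) + 1 = 2 * n + 1 + 1 + 1 by ring, qPoch_succ, qPoch_succ, ih,
      qPoch_succ q _ (n + 1), qPoch_succ (q ^ 2) _ n, qPoch_succ (-q) _ (2 * n + 1 + 1),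
      qPoch_succ (-q) _ (2 * n + 1)]
    ring

@[fun_prop]
lemma continuousAt_qPoch {f g : ℂ → ℂ} {a : ℂ} (hf : ContinuousAt f a) (hg : ContinuousAt g a)
    (n : ℕ) : ContinuousAt (fun q ↦ qPoch (f q) (g q) n) a := by
  unfold qPoch
  fun_prop

end QPochhammer

section GaussianBinomial

variable {p : ℂ}

lemma qBinom_eq_zero_of_lt (p : ℂ) {n k : ℕ} (h : n < k) : qBinom p n k = 0 :=
  if_neg h.not_ge

lemma qBinom_zero_right (hp : ¬IsOfFinOrder p) (n : ℕ) : qBinom p n 0 = 1 := by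
  simp [qBinom, qPoch_zero, qPoch_self_ne_zero hp n]

lemma qBinom_self (hp : ¬IsOfFinOrder p) (n : ℕ) : qBinom p n n = 1 := by
  simp [qBinom, qPoch_zero, qPoch_self_ne_zero hp n]

lemma qBinom_add_left (p : ℂ) (m n : ℕ) :
    qBinom p (m + n) m = qPoch p p (m + n) / (qPoch p p n * qPoch p p m) := by
  simp [qBinom]

lemma qBinom_add_right (p : ℂ) (m n : ℕ) :
    qBinom p (m + n) n = qPoch p p (m + n) / (qPoch p p n * qPoch p p m) := by
  rw [add_comm, qBinom_add_left, mul_comm]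

lemma qBinom_succ_succ (hp : ¬IsOfFinOrder p) (n k : ℕ) :
    qBinom p (n + 1) (k + 1) = qBinom p n (k + 1) + p ^ (n - k) * qBinom p n k := by
  rcases lt_trichotomy n k with h | rfl | h
  · simp [qBinom_eq_zero_of_lt p h, qBinom_eq_zero_of_lt p (Nat.lt_succ_of_lt h),
      qBinom_eq_zero_of_lt p (Nat.succ_lt_succ h)]
  · simp [qBinom_eq_zero_of_lt p n.lt_succ_self, qBinom_self hp]
  · obtain ⟨j, rfl⟩ := Nat.exists_eq_add_of_lt h
    rw [show k + j + 1 + 1 = (k + 1) + (j + 1) by ring, qBinom_add_left,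
      show k + j + 1 = (k + 1) + j by ring, qBinom_add_left, show k + 1 + j = k + (j + 1) by ring,
      qBinom_add_left, show k + 1 + (j + 1) = k + (j + 1) + 1 by ring, Nat.add_sub_cancel_left]
    have hj := qPoch_self_ne_zero hp (j + 1)
    have hk := qPoch_self_ne_zero hp (k + 1)
    rw [qPoch_succ] at hj hk
    obtain ⟨hj₀, hj₁⟩ := mul_ne_zero_iff.1 hj
    obtain ⟨hk₀, hk₁⟩ := mul_ne_zero_iff.1 hk
    rw [qPoch_succ p p (k + (j + 1)), qPoch_succ p p j, qPoch_succ p p k]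
    field_simp
    ring

lemma sum_qBinom_succ_mul (hp : ¬IsOfFinOrder p) (L : ℕ) (f : ℕ → ℂ) :
    ∑ k ∈ range (L + 2), qBinom p (L + 1) k * f k =
      ∑ k ∈ range (L + 1), qBinom p L k * (f k + p ^ (L - k) * f (k + 1)) := by
  have hL : ∑ k ∈ range (L + 2), qBinom p L k * f k = ∑ k ∈ range (L + 1), qBinom p L k * f k := by
    rw [sum_range_succ, qBinom_eq_zero_of_lt p L.lt_succ_self, zero_mul, add_zero]
  simp_rw [mul_add, sum_add_distrib, ← hL, sum_range_succ' _ (L + 1), qBinom_succ_succ hp,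
    qBinom_zero_right hp, add_mul, sum_add_distrib]
  rw [add_right_comm]
  congr 2
  ext k
  ring

theorem qPoch_eq_sum_qBinom (hp : ¬IsOfFinOrder p) (x : ℂ) (L : ℕ) :
    qPoch x p L = ∑ k ∈ range (L + 1), qBinom p L k * ((-x) ^ k * p ^ k.choose 2) := by
  induction L with
  | zero => simp [qPoch_zero, qBinom_self hp]
  | succ L ih =>
    rw [sum_qBinom_succ_mul hp, qPoch_succ, ih, sum_mul]
    refine sum_congr rfl fun k hk ↦ ?_
    have hpow : p ^ (L - k) * p ^ k = p ^ L := by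
      rw [← pow_add, Nat.sub_add_cancel (mem_range_succ_iff.1 hk)]
    rw [Nat.choose_succ_succ', Nat.choose_one_right, pow_add, ← hpow]
    ring

theorem sum_qBinom_div_qPoch (hp : ¬IsOfFinOrder p) (L : ℕ) {c : ℂ}
    (hc : ∀ n, qPoch (c * p) p n ≠ 0) :
    ∑ k ∈ range (L + 1), qBinom p L k * (c ^ k * p ^ k ^ 2 / qPoch (c * p) p k) =
      1 / qPoch (c * p) p L := by
  induction L generalizing c with
  | zero => simp [qPoch_zero, qBinom_self hp]
  | succ L ih =>
    have hcp (n : ℕ) : (1 - c * p) * qPoch (c * p * p) p n ≠ 0 :=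
      qPoch_succ' (c * p) p n ▸ hc (n + 1)
    have hc₁ := left_ne_zero_of_mul (hcp L)
    have hsplit : ∀ k ∈ range (L + 1),
        qBinom p L k * (c ^ k * p ^ k ^ 2 / qPoch (c * p) p k + p ^ (L - k) *
          (c ^ (k + 1) * p ^ (k + 1) ^ 2 / qPoch (c * p) p (k + 1))) =
        qBinom p L k * (c ^ k * p ^ k ^ 2 / qPoch (c * p) p k) + c * p ^ (L + 1) / (1 - c * p) *
          (qBinom p L k * ((c * p) ^ k * p ^ k ^ 2 / qPoch (c * p * p) p k)) := by
      intro k hk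
      have hpow : p ^ (L - k) * p ^ k = p ^ L := by
        rw [← pow_add, Nat.sub_add_cancel (mem_range_succ_iff.1 hk)]
      have hk₁ := right_ne_zero_of_mul (hcp k)
      rw [qPoch_succ' (c * p) p k, pow_succ p L, ← hpow]
      field_simp [hk₁]
      ring
    rw [sum_qBinom_succ_mul hp, sum_congr rfl hsplit, sum_add_distrib, ← mul_sum, ih hc,
      ih fun n ↦ right_ne_zero_of_mul (hcp n)]
    have hL := hc (L + 1)
    rw [qPoch_succ] at hL
    obtain ⟨hL₀, hL₂⟩ := mul_ne_zero_iff.1 hL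
    have hshift : (1 - c * p) * qPoch (c * p * p) p L =
        qPoch (c * p) p L * (1 - c * p * p ^ L) := by
      rw [← qPoch_succ', qPoch_succ]
    rw [qPoch_succ, div_mul_div_comm, hshift]
    field_simp
    ring

end GaussianBinomial

section BaileyPairs

/-- A Bailey pair `(α, β)` relative to `a`, in base `p`. -/
def IsBaileyPair (a p : ℂ) (α β : ℕ → ℂ) : Prop :=
  ∀ n, β n = ∑ r ∈ range (n + 1), α r / (qPoch p p (n - r) * qPoch (a * p) p (n + r))

/-- The action on the `β`-sequence of the step of the Bailey chain in which both parameters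
`ρ₁, ρ₂` of Bailey's lemma tend to infinity. -/
noncomputable def baileyStep (a p : ℂ) (β : ℕ → ℂ) (n : ℕ) : ℂ :=
  ∑ j ∈ range (n + 1), a ^ j * p ^ j ^ 2 * β j / qPoch p p (n - j)

variable {a p : ℂ} {α β : ℕ → ℂ}

lemma sum_pow_div_qPoch_mul_qPoch (hp : ¬IsOfFinOrder p) (ha : ∀ n, qPoch (a * p) p n ≠ 0)
    (r L : ℕ) :
    ∑ i ∈ range (L + 1), a ^ (r + i) * p ^ (r + i) ^ 2 /
        (qPoch p p i * qPoch (a * p) p (r + i + r) * qPoch p p (L - i)) =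
      a ^ r * p ^ r ^ 2 / (qPoch p p L * qPoch (a * p) p (r + L + r)) := by
  set c := a * p ^ (2 * r) with hc
  have hsplit (n : ℕ) : qPoch (a * p) p (r + n + r) =
      qPoch (a * p) p (2 * r) * qPoch (c * p) p n := by
    rw [show r + n + r = 2 * r + n by ring, qPoch_add, hc, mul_right_comm]
  have hc₀ (n : ℕ) : qPoch (c * p) p n ≠ 0 := right_ne_zero_of_mul (hsplit n ▸ ha (r + n + r))
  have hterm : ∀ i ∈ range (L + 1), a ^ (r + i) * p ^ (r + i) ^ 2 /
      (qPoch p p i * qPoch (a * p) p (r + i + r) * qPoch p p (L - i)) =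
      a ^ r * p ^ r ^ 2 / (qPoch p p L * qPoch (a * p) p (2 * r)) *
        (qBinom p L i * (c ^ i * p ^ i ^ 2 / qPoch (c * p) p i)) := by
    intro i hi
    have hL := qPoch_self_ne_zero hp L
    rw [hsplit, qBinom, if_pos (mem_range_succ_iff.1 hi), hc]
    field_simp [hL]
    ring
  rw [sum_congr rfl hterm, ← mul_sum, sum_qBinom_div_qPoch hp L hc₀, hsplit, div_mul_div_comm,
    mul_one, mul_assoc]

lemma IsBaileyPair.step (h : IsBaileyPair a p α β) (hp : ¬IsOfFinOrder p)
    (ha : ∀ n, qPoch (a * p) p n ≠ 0) :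
    IsBaileyPair a p (fun r ↦ a ^ r * p ^ r ^ 2 * α r) (baileyStep a p β) := by
  intro n
  let F (r i : ℕ) : ℂ := α r * (a ^ (r + i) * p ^ (r + i) ^ 2 /
    (qPoch p p i * qPoch (a * p) p (r + i + r) * qPoch p p (n - r - i)))
  have hF : ∀ j ∈ range (n + 1), a ^ j * p ^ j ^ 2 * β j / qPoch p p (n - j) =
      ∑ r ∈ range (j + 1), F r (j - r) := by
    intro j _
    rw [h j, mul_sum, sum_div]
    refine sum_congr rfl fun r hr ↦ ?_
    obtain ⟨i, rfl⟩ := Nat.exists_eq_add_of_le (mem_range_succ_iff.1 hr)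
    simp only [F, Nat.add_sub_cancel_left, Nat.sub_sub]
    ring
  rw [baileyStep, sum_congr rfl hF, sum_range_diag_flip]
  refine sum_congr rfl fun r hr ↦ ?_
  obtain ⟨L, rfl⟩ := Nat.exists_eq_add_of_le (mem_range_succ_iff.1 hr)
  simp only [F, Nat.add_sub_cancel_left, add_assoc r L 1]
  rw [← mul_sum, sum_pow_div_qPoch_mul_qPoch hp ha]
  ring

lemma IsBaileyPair.iterate_step (h : IsBaileyPair a p α β) (hp : ¬IsOfFinOrder p)
    (ha : ∀ n, qPoch (a * p) p n ≠ 0) (k : ℕ) :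
    IsBaileyPair a p (fun r ↦ (a ^ r * p ^ r ^ 2) ^ k * α r) ((baileyStep a p)^[k] β) := by
  induction k with
  | zero => simpa only [pow_zero, one_mul, Function.iterate_zero_apply] using h
  | succ k ih =>
    simpa only [pow_succ', mul_assoc, Function.iterate_succ_apply'] using ih.step hp ha

lemma IsBaileyPair.sum_mul (h : IsBaileyPair a p α β) (δ : ℕ → ℂ) (N : ℕ) :
    ∑ n ∈ range N, δ n * β n =
      ∑ r ∈ range N, α r *
        ∑ n ∈ Ico r N, δ n / (qPoch p p (n - r) * qPoch (a * p) p (n + r)) := by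
  simp_rw [h _, mul_sum, mul_div_left_comm, range_eq_Ico, sum_Ico_Ico_comm]

end BaileyPairs

section InitialPair

/-- The `α`-sequence of the Bailey pair relative to `q²`, in base `q²`, that starts the chain. -/
noncomputable def initialAlpha (q : ℂ) (r : ℕ) : ℂ :=
  (-1) ^ r * q ^ r ^ 2 * (1 - q ^ (2 * r + 1)) / (1 - q ^ 2)

/-- The `β`-sequence of the Bailey pair relative to `q²`, in base `q²`, that starts the chain. -/
noncomputable def initialBeta (q : ℂ) (n : ℕ) : ℂ :=
  qPoch q (q ^ 2) n / (qPoch (q ^ 2) (q ^ 2) n * qPoch (-q) q (2 * n + 1))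

variable {q : ℂ}

lemma pow_sq_mul_qPoch_inv_pow_half (hq : q ≠ 0) (n : ℕ) :
    q ^ (n + 1) ^ 2 * qPoch (q ^ (2 * n + 1))⁻¹ (q ^ 2) (n + 1) =
      (-1) ^ (n + 1) * qPoch q (q ^ 2) (n + 1) := by
  have hfactor : ∀ i ∈ range (n + 1), 1 - (q ^ (2 * n + 1))⁻¹ * (q ^ 2) ^ (n + 1 - 1 - i) =
      -(q ^ (2 * i + 1))⁻¹ * (1 - q * (q ^ 2) ^ i) := by
    intro i hi
    obtain ⟨j, rfl⟩ := Nat.exists_eq_add_of_le (mem_range_succ_iff.1 hi)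
    rw [Nat.add_sub_cancel, Nat.add_sub_cancel_left]
    field_simp
    ring
  have hodd (k : ℕ) : ∏ i ∈ range k, -(q ^ (2 * i + 1))⁻¹ = (-1) ^ k * (q ^ k ^ 2)⁻¹ := by
    induction k with
    | zero => simp
    | succ k ih =>
      rw [prod_range_succ, ih]
      field_simp
      ring
  rw [qPoch, ← prod_range_reflect, prod_congr rfl hfactor, prod_mul_distrib, hodd, qPoch]
  field_simp

lemma pow_sq_mul_qPoch_inv_pow (hq : q ≠ 0) (n : ℕ) :
    q ^ (n + 1) ^ 2 * qPoch (q ^ (2 * n + 1))⁻¹ (q ^ 2) (2 * n + 1) =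
      (-1) ^ (n + 1) * (qPoch q (q ^ 2) n * qPoch q (q ^ 2) (n + 1)) := by
  have hshift : (q ^ (2 * n + 1))⁻¹ * (q ^ 2) ^ (n + 1) = q := by
    field_simp
    ring
  rw [show qPoch (q ^ (2 * n + 1))⁻¹ (q ^ 2) (2 * n + 1) =
      qPoch (q ^ (2 * n + 1))⁻¹ (q ^ 2) (n + 1 + n) by congr 1; ring,
    qPoch_add, hshift, ← mul_assoc, pow_sq_mul_qPoch_inv_pow_half hq]
  ring

lemma pow_sq_mul_inv_pow_mul_choose_two (hq : q ≠ 0) {n j d : ℕ}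
    (hd : d + 2 * (n + 1) * j = (n + 1) ^ 2 + j ^ 2) :
    q ^ (n + 1) ^ 2 * ((-(q ^ (2 * n + 1))⁻¹) ^ j * (q ^ 2) ^ j.choose 2) = (-1) ^ j * q ^ d := by
  have hexp : (n + 1) ^ 2 + 2 * j.choose 2 = d + (2 * n + 1) * j := by
    have hj : 2 * j.choose 2 + j = j ^ 2 := by
      rw [Nat.choose_two_right, Nat.mul_div_cancel' (Nat.even_mul_pred_self j).two_dvd]
      cases j with
      | zero => rfl
      | succ j => rw [Nat.add_sub_cancel]; ring
    linarith
  have hpow : q ^ (n + 1) ^ 2 * (q ^ 2) ^ j.choose 2 = q ^ d * (q ^ (2 * n + 1)) ^ j := by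
    rw [← pow_mul, ← pow_mul, ← pow_add, ← pow_add, hexp]
  rw [mul_left_comm, hpow, neg_pow, inv_pow]
  field_simp

/-- The finite form of the Jacobi triple product at `z = q`, with the terms of index `-r` and
`r + 1` paired. -/
theorem sum_qBinom_eq_qPoch_mul_qPoch (hq : q ≠ 0) (hq' : ¬IsOfFinOrder (q ^ 2)) (n : ℕ) :
    ∑ r ∈ range (n + 1), (-1) ^ r * q ^ r ^ 2 * (1 - q ^ (2 * r + 1)) *
        qBinom (q ^ 2) (2 * n + 1) (n - r) =
      qPoch q (q ^ 2) n * qPoch q (q ^ 2) (n + 1) := by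
  set y := (q ^ (2 * n + 1))⁻¹ with hy
  have hpair : ∀ r ∈ range (n + 1),
      qBinom (q ^ 2) (2 * n + 1) (n + 1 - 1 - r) * (q ^ (n + 1) ^ 2 *
        ((-y) ^ (n + 1 - 1 - r) * (q ^ 2) ^ (n + 1 - 1 - r).choose 2)) +
      qBinom (q ^ 2) (2 * n + 1) (n + 1 + r) * (q ^ (n + 1) ^ 2 *
        ((-y) ^ (n + 1 + r) * (q ^ 2) ^ (n + 1 + r).choose 2)) =
      (-1) ^ (n + 1) * ((-1) ^ r * q ^ r ^ 2 * (1 - q ^ (2 * r + 1)) *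
        qBinom (q ^ 2) (2 * n + 1) (n - r)) := by
    intro r hr
    obtain ⟨k, rfl⟩ := Nat.exists_eq_add_of_le (mem_range_succ_iff.1 hr)
    have hsymm : qBinom (q ^ 2) (2 * (r + k) + 1) (r + k + 1 + r) =
        qBinom (q ^ 2) (2 * (r + k) + 1) k := by
      rw [show 2 * (r + k) + 1 = r + k + 1 + r + k by ring, qBinom_add_left, qBinom_add_right]
    have hsign : (-1 : ℂ) ^ (r + k) * (-1) ^ r = (-1) ^ k := by
      rw [add_comm, pow_add, mul_assoc, ← mul_pow, neg_one_mul, neg_neg, one_pow, mul_one]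
    rw [Nat.add_sub_cancel, Nat.add_sub_cancel_left, hsymm,
      pow_sq_mul_inv_pow_mul_choose_two hq (d := (r + 1) ^ 2) (by ring),
      pow_sq_mul_inv_pow_mul_choose_two hq (d := r ^ 2) (by ring), pow_add _ (r + k + 1) r,
      pow_succ _ (r + k), ← hsign]
    ring
  have hrothe := pow_sq_mul_qPoch_inv_pow hq n
  rw [← hy, qPoch_eq_sum_qBinom hq' y, mul_sum, show 2 * n + 1 + 1 = n + 1 + (n + 1) by ring,
    sum_range_add, ← sum_range_reflect, ← sum_add_distrib] at hrothe
  simp_rw [mul_left_comm (q ^ (n + 1) ^ 2) (qBinom _ _ _)] at hrothe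
  rw [sum_congr rfl hpair, ← mul_sum] at hrothe
  exact mul_left_cancel₀ (by simp) hrothe

theorem isBaileyPair_initial (hq : q ≠ 0) (hq' : ¬IsOfFinOrder (q ^ 2)) :
    IsBaileyPair (q ^ 2) (q ^ 2) (initialAlpha q) (initialBeta q) := by
  intro n
  have hp := qPoch_self_ne_zero hq' (2 * n + 1)
  have hterm : ∀ r ∈ range (n + 1), initialAlpha q r /
      (qPoch (q ^ 2) (q ^ 2) (n - r) * qPoch (q ^ 2 * q ^ 2) (q ^ 2) (n + r)) =
      (-1) ^ r * q ^ r ^ 2 * (1 - q ^ (2 * r + 1)) * qBinom (q ^ 2) (2 * n + 1) (n - r) /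
        qPoch (q ^ 2) (q ^ 2) (2 * n + 1) := by
    intro r hr
    obtain ⟨k, rfl⟩ := Nat.exists_eq_add_of_le (mem_range_succ_iff.1 hr)
    have hrk : 2 * (r + k) + 1 = k + (r + k + r + 1) := by ring
    rw [initialAlpha, Nat.add_sub_cancel_left, hrk, qBinom_add_left,
      qPoch_succ' _ _ (r + k + r)]
    rw [hrk] at hp
    field_simp [hp]
  rw [initialBeta, sum_congr rfl hterm, ← sum_div, sum_qBinom_eq_qPoch_mul_qPoch hq hq',
    qPoch_sq_sq_odd]
  rw [qPoch_sq_sq_odd] at hp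
  have hodd := left_ne_zero_of_mul (left_ne_zero_of_mul hp)
  field_simp [hodd]

end InitialPair

section IteratedSums

lemma sum_piFinset_succ {α A : Type*} [AddCommMonoid A] (k : ℕ) (s : Finset α)
    (F : (Fin (k + 1) → α) → A) :
    ∑ n ∈ Fintype.piFinset (fun _ ↦ s), F n =
      ∑ n ∈ Fintype.piFinset (fun _ : Fin k ↦ s), ∑ b ∈ s, F (Fin.cons b n) := by
  rw [← sum_product_right']
  refine (sum_equiv (Fin.consEquiv fun _ ↦ α) (fun x ↦ ?_) fun _ _ ↦ rfl).symm
  simp [Fin.consEquiv, Fin.forall_fin_succ]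

variable {R : Type*} [CommSemiring R]

/-- The action of a lower triangular infinite matrix `K` on sequences; only the entries `K a b`
with `b ≤ a` matter. -/
def lowerMulVec (K : ℕ → ℕ → R) (f : ℕ → R) (a : ℕ) : R :=
  ∑ b ∈ range (a + 1), K a b * f b

theorem sum_piFinset_range_prod {K : ℕ → ℕ → R} (hK : ∀ a b, a < b → K a b = 0) (N k : ℕ)
    (f w : ℕ → R) :
    ∑ n ∈ Fintype.piFinset (fun _ : Fin (k + 1) ↦ range N),
        f (n 0) * (∏ i : Fin k, K (n i.succ) (n i.castSucc)) * w (n (Fin.last k)) =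
      ∑ a ∈ range N, (lowerMulVec K)^[k] f a * w a := by
  induction k generalizing f with
  | zero => simp [sum_piFinset_succ]
  | succ k ih =>
    rw [sum_piFinset_succ, Function.iterate_succ_apply, ← ih]
    refine sum_congr rfl fun n hn ↦ ?_
    have hhead : ∑ b ∈ range N, K (n 0) b * f b = lowerMulVec K f (n 0) := by
      have hn₀ : n 0 + 1 ≤ N := mem_range.1 (Fintype.mem_piFinset.1 hn 0)
      refine (sum_subset (range_subset_range.2 hn₀) fun b _ hb ↦ ?_).symm
      rw [hK _ _ (by simpa using hb), zero_mul]
    simp only [Fin.prod_univ_succ, Fin.cons_zero, Fin.cons_succ, Fin.castSucc_zero,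
      Fin.castSucc_succ, ← Fin.succ_last, ← hhead, sum_mul]
    exact sum_congr rfl fun b _ ↦ by ring

end IteratedSums

section MultiSum

lemma pad_val {k : ℕ} (g : Fin k → ℕ) (i : Fin k) : pad k g i = g i := by simp [pad]

lemma Gterm_pad (k : ℕ) (q : ℂ) (n : Fin (k + 1) → ℕ) :
    Gterm (k + 2) q (pad (k + 1) n) =
      qPoch q (q ^ 2) (n 0) / qPoch (-q) q (2 * n 0 + 1) *
        (∏ i : Fin k, q ^ (2 * n i.castSucc ^ 2 + 2 * n i.castSucc) *
          qBinom (q ^ 2) (n i.succ) (n i.castSucc)) *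
        ((-1) ^ n (Fin.last k) * q ^ (n (Fin.last k) * (n (Fin.last k) + 1))) := by
  have hzero : pad (k + 1) n 0 = n 0 := pad_val n 0
  have hlast : pad (k + 1) n k = n (Fin.last k) := pad_val n (Fin.last k)
  have hcast (i : Fin k) : pad (k + 1) n i = n i.castSucc := pad_val n i.castSucc
  have hsucc (i : Fin k) : pad (k + 1) n (i + 1) = n i.succ := pad_val n i.succ
  simp only [Gterm, Nat.add_sub_cancel, prod_range, sum_range, hzero, hlast, hcast, hsucc,
    prod_mul_distrib, prod_pow_eq_pow_sum, pow_add q (n (Fin.last k) * _)]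
  ring

lemma lowerMulVec_qPoch_mul {q : ℂ} (hq : ¬IsOfFinOrder (q ^ 2)) (β : ℕ → ℂ) :
    lowerMulVec (fun a b ↦ q ^ (2 * b ^ 2 + 2 * b) * qBinom (q ^ 2) a b)
        (fun n ↦ qPoch (q ^ 2) (q ^ 2) n * β n) =
      fun n ↦ qPoch (q ^ 2) (q ^ 2) n * baileyStep (q ^ 2) (q ^ 2) β n := by
  ext n
  rw [lowerMulVec, baileyStep, mul_sum]
  refine sum_congr rfl fun b hb ↦ ?_
  have hb₀ := qPoch_self_ne_zero hq b
  rw [qBinom, if_pos (mem_range_succ_iff.1 hb)]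
  field_simp [hb₀]
  ring

theorem U_eq_sum_iterate_baileyStep {q : ℂ} (hq : ¬IsOfFinOrder (q ^ 2)) (e N : ℕ) :
    U (e + 2) N q = ∑ n ∈ range N, (-1) ^ n * q ^ (n * (n + 1)) * qPoch (q ^ 2) (q ^ 2) n *
      (baileyStep (q ^ 2) (q ^ 2))^[e] (initialBeta q) n := by
  have hseed : (fun b ↦ qPoch q (q ^ 2) b / qPoch (-q) q (2 * b + 1)) =
      fun n ↦ qPoch (q ^ 2) (q ^ 2) n * initialBeta q n := by
    ext n
    have hn := qPoch_self_ne_zero hq n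
    rw [initialBeta]
    field_simp
  let K (a b : ℕ) : ℂ := q ^ (2 * b ^ 2 + 2 * b) * qBinom (q ^ 2) a b
  have hchain : Function.Semiconj (fun (β : ℕ → ℂ) n ↦ qPoch (q ^ 2) (q ^ 2) n * β n)
      (baileyStep (q ^ 2) (q ^ 2)) (lowerMulVec K) :=
    fun β ↦ (lowerMulVec_qPoch_mul hq β).symm
  calc U (e + 2) N q
      = ∑ n ∈ Fintype.piFinset (fun _ : Fin (e + 1) ↦ range N), Gterm (e + 2) q (pad (e + 1) n) :=
        rfl
    _ = ∑ n ∈ range N, (lowerMulVec K)^[e] (fun n ↦ qPoch (q ^ 2) (q ^ 2) n * initialBeta q n) n *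
          ((-1) ^ n * q ^ (n * (n + 1))) := by
        simp_rw [Gterm_pad, ← hseed]
        exact sum_piFinset_range_prod (K := K)
          (fun a b hab ↦ by simp only [K, qBinom_eq_zero_of_lt _ hab, mul_zero]) N e
          (fun b ↦ qPoch q (q ^ 2) b / qPoch (-q) q (2 * b + 1))
          fun a ↦ (-1) ^ a * q ^ (a * (a + 1))
    _ = _ := by
        simp_rw [← (hchain.iterate_right e) (initialBeta q)]
        exact sum_congr rfl fun n _ ↦ by ring

end MultiSum

section ConjugateSums

/-- The `n`-th term of the conjugate Bailey sequence `γ_r` attached to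
`δ_n = (-1)^n q^(n(n+1)) (q²;q²)_n`, up to a factor depending on `r` only. Of the terms with
`n < N`, only `n = N - 1` has a pole at the primitive `N`-th roots of unity, and it is simple. -/
noncomputable def conjTerm (q : ℂ) (n r : ℕ) : ℂ :=
  (-1) ^ (n - r) * q ^ ((n - r) * (n + r + 1)) /
    (qPoch (q ^ 2) (q ^ 2) (n - r) * qPoch ((q ^ 2) ^ (n + 1)) (q ^ 2) (r + 1))

/-- The truncated sum over `n < N` of the terms `conjTerm q n r`. -/
noncomputable def conjSum (q : ℂ) (N r : ℕ) : ℂ := ∑ n ∈ Ico r N, conjTerm q n r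

/-- The certificate that telescopes `conjTerm q n r - conjTerm q n (r + 1)` in `n`; see
`conjTerm_sub_conjTerm_succ`. -/
noncomputable def conjCert (q : ℂ) (n s : ℕ) : ℂ :=
  (1 + q ^ (2 * s)) * (-1) ^ (n - s) * q ^ ((n - s) * (n + s + 1)) /
    (qPoch (q ^ 2) (q ^ 2) (n - s) * qPoch ((q ^ 2) ^ (n + 1)) (q ^ 2) s)

variable {q : ℂ}

lemma one_sub_pow_ne_zero {p : ℂ} (hp : ¬IsOfFinOrder p) {n : ℕ} (hn : 0 < n) : 1 - p ^ n ≠ 0 :=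
  sub_ne_zero.2 fun h ↦ hp (isOfFinOrder_iff_pow_eq_one.2 ⟨n, hn, h.symm⟩)

lemma qPoch_pow_succ_ne_zero {p : ℂ} (hp : ¬IsOfFinOrder p) (m n : ℕ) :
    qPoch (p ^ (m + 1)) p n ≠ 0 := by
  have h := qPoch_self_ne_zero hp (m + n)
  rw [qPoch_add, ← pow_succ'] at h
  exact right_ne_zero_of_mul h

lemma conjTerm_self (hq : ¬IsOfFinOrder (q ^ 2)) (r : ℕ) :
    conjTerm q r r = conjCert q (r + 1) (r + 1) := by
  have hr := qPoch_pow_succ_ne_zero hq r (r + 1)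
  have hr' := qPoch_pow_succ_ne_zero hq (r + 1) (r + 1)
  have hshift : (1 - (q ^ 2) ^ (r + 1)) * qPoch ((q ^ 2) ^ (r + 1 + 1)) (q ^ 2) (r + 1) =
      (1 - (q ^ 2) ^ (r + 1)) *
        ((1 + q ^ (2 * (r + 1))) * qPoch ((q ^ 2) ^ (r + 1)) (q ^ 2) (r + 1)) := by
    rw [pow_succ _ (r + 1), ← qPoch_succ', qPoch_succ]
    ring
  simp only [conjTerm, conjCert, Nat.sub_self, zero_mul, pow_zero, qPoch_zero, one_mul, mul_one]
  rw [div_eq_div_iff hr hr', one_mul,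
    mul_left_cancel₀ (one_sub_pow_ne_zero hq r.succ_pos) hshift]

theorem conjTerm_sub_conjTerm_succ (hq : ¬IsOfFinOrder (q ^ 2)) {n r : ℕ} (hr : r < n) :
    conjTerm q n r - conjTerm q n (r + 1) = conjCert q (n + 1) (r + 1) - conjCert q n (r + 1) := by
  obtain ⟨d, rfl⟩ := Nat.exists_eq_add_of_lt hr
  set Q := (q ^ 2) ^ (r + d + 1 + 1) with hQ
  have hd := qPoch_self_ne_zero hq (d + 1)
  have hB : qPoch Q (q ^ 2) (r + 1 + 1) ≠ 0 := qPoch_pow_succ_ne_zero hq _ _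
  have hC : (1 - Q) * qPoch (Q * q ^ 2) (q ^ 2) (r + 1) ≠ 0 := by rwa [← qPoch_succ']
  have hshift : qPoch (Q * q ^ 2) (q ^ 2) (r + 1) =
      qPoch Q (q ^ 2) (r + 1) * (1 - Q * (q ^ 2) ^ (r + 1)) / (1 - Q) := by
    rw [eq_div_iff (left_ne_zero_of_mul hC), mul_comm, ← qPoch_succ', qPoch_succ]
  rw [qPoch_succ] at hd hB
  obtain ⟨hd₀, hd₁⟩ := mul_ne_zero_iff.1 hd
  obtain ⟨hB₀, hB₁⟩ := mul_ne_zero_iff.1 hB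
  have hC₀ := left_ne_zero_of_mul hC
  have hpow₁ : q ^ ((d + 1) * (r + d + 1 + r + 1)) =
      q ^ (d * (r + d + 1 + (r + 1) + 1)) * (q ^ 2) ^ (r + 1) := by ring
  have hpow₂ : q ^ ((d + 1) * (r + d + 1 + 1 + (r + 1) + 1)) =
      q ^ (d * (r + d + 1 + (r + 1) + 1)) * Q := by rw [hQ]; ring
  simp only [conjTerm, conjCert, show r + d + 1 - r = d + 1 by omega,
    show r + d + 1 - (r + 1) = d by omega, show r + d + 1 + 1 - (r + 1) = d + 1 by omega]
  rw [pow_succ _ (r + d + 1 + 1), ← hQ, hshift, hpow₁, hpow₂, qPoch_succ Q _ (r + 1),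
    qPoch_succ _ _ d, pow_mul q 2 (r + 1)]
  have hQd : Q = (q ^ 2) ^ (r + 1) * (q ^ 2 * (q ^ 2) ^ d) := by rw [hQ]; ring
  clear_value Q
  generalize q ^ (d * (r + d + 1 + (r + 1) + 1)) = X
  generalize (q ^ 2) ^ (r + 1) = Y at hB₁ hQd ⊢
  generalize q ^ 2 * (q ^ 2) ^ d = Z at hd₁ hQd ⊢
  subst hQd
  rw [mul_right_comm, ← sq] at hB₁
  field_simp
  ring

lemma conjSum_eq_conjSum_succ_add (hq : ¬IsOfFinOrder (q ^ 2)) {N r : ℕ} (hr : r < N) :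
    conjSum q N r = conjSum q N (r + 1) + conjCert q N (r + 1) := by
  have htelescope : ∑ n ∈ Ico (r + 1) N, (conjTerm q n r - conjTerm q n (r + 1)) =
      conjCert q N (r + 1) - conjCert q (r + 1) (r + 1) := by
    rw [← sum_Ico_sub (fun n ↦ conjCert q n (r + 1)) hr]
    exact sum_congr rfl fun n hn ↦ conjTerm_sub_conjTerm_succ hq (mem_Ico.1 hn).1
  rw [sum_sub_distrib] at htelescope
  rw [conjSum, conjSum, sum_eq_sum_Ico_succ_bot hr, conjTerm_self hq]
  linear_combination htelescope

lemma conjSum_zero (hq : ¬IsOfFinOrder (q ^ 2)) {N r : ℕ} (hr : r ≤ N) :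
    conjSum q N 0 = conjSum q N r + ∑ s ∈ range r, conjCert q N (s + 1) := by
  induction r with
  | zero => rw [sum_range_zero, add_zero]
  | succ r ih =>
    rw [ih (by omega), conjSum_eq_conjSum_succ_add hq (by omega), sum_range_succ]
    ring

end ConjugateSums

section PartialTheta

/-- The exponent of the `r`-th positive term of the partial theta function; in terms of `m = e + 2`,
`8(m - 1)` times it plus `(2m - 3)²` is the square of `4(m - 1)r + 2m - 3`. -/
def thetaExp (e r : ℕ) : ℕ := 2 * (e + 1) * r ^ 2 + (2 * e + 1) * r

/-- The two terms of the partial theta function of `m = e + 2` whose characters are `1` and `-1` in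
the `r`-th period. -/
noncomputable def thetaTerm (e r : ℕ) (q : ℂ) : ℂ :=
  q ^ thetaExp e r - q ^ (thetaExp e r + (2 * r + 1))

/-- The partial theta function of `m = e + 2`, truncated after `N` periods. -/
noncomputable def truncTheta (e N : ℕ) (q : ℂ) : ℂ := ∑ r ∈ range N, thetaTerm e r q

variable {q : ℂ}

lemma alpha_mul_delta_div_eq (hq : ¬IsOfFinOrder (q ^ 2)) (e : ℕ) {n r : ℕ} (hr : r ≤ n) :
    ((q ^ 2) ^ r * (q ^ 2) ^ r ^ 2) ^ e * initialAlpha q r *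
        ((-1) ^ n * q ^ (n * (n + 1)) * qPoch (q ^ 2) (q ^ 2) n /
          (qPoch (q ^ 2) (q ^ 2) (n - r) * qPoch (q ^ 2 * q ^ 2) (q ^ 2) (n + r))) =
      thetaTerm e r q * conjTerm q n r := by
  obtain ⟨d, rfl⟩ := Nat.exists_eq_add_of_le hr
  have hsplit : (1 - q ^ 2) * qPoch (q ^ 2 * q ^ 2) (q ^ 2) (r + d + r) =
      qPoch (q ^ 2) (q ^ 2) (r + d) * qPoch ((q ^ 2) ^ (r + d + 1)) (q ^ 2) (r + 1) := by
    rw [← qPoch_succ', add_assoc _ r 1, qPoch_add, ← pow_succ']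
  have hr₀ := qPoch_self_ne_zero hq (r + d)
  have hexp : (-1) ^ r * ((q ^ 2) ^ r * (q ^ 2) ^ r ^ 2) ^ e * q ^ r ^ 2 * (1 - q ^ (2 * r + 1)) *
      ((-1) ^ (r + d) * q ^ ((r + d) * (r + d + 1))) =
      thetaTerm e r q * ((-1) ^ d * q ^ (d * (r + d + r + 1))) := by
    have hsign : (-1 : ℂ) ^ r * (-1) ^ (r + d) = (-1) ^ d := by
      rw [pow_add, ← mul_assoc, ← mul_pow, neg_one_mul, neg_neg, one_pow, one_mul]
    rw [thetaTerm, thetaExp, ← hsign]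
    ring
  calc _ = (-1) ^ r * ((q ^ 2) ^ r * (q ^ 2) ^ r ^ 2) ^ e * q ^ r ^ 2 * (1 - q ^ (2 * r + 1)) *
        ((-1) ^ (r + d) * q ^ ((r + d) * (r + d + 1))) * qPoch (q ^ 2) (q ^ 2) (r + d) /
        (qPoch (q ^ 2) (q ^ 2) d *
          ((1 - q ^ 2) * qPoch (q ^ 2 * q ^ 2) (q ^ 2) (r + d + r))) := by
        rw [initialAlpha, Nat.add_sub_cancel_left, ← mul_div_assoc (_ ^ e), div_mul_div_comm]
        congr 1 <;> ring
    _ = _ := by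
        rw [hexp, hsplit, conjTerm, Nat.add_sub_cancel_left]
        field_simp [hr₀]

theorem U_eq_sum_thetaTerm_mul_conjSum (hq : q ≠ 0) (hq' : ¬IsOfFinOrder (q ^ 2)) (e N : ℕ) :
    U (e + 2) N q = ∑ r ∈ range N, thetaTerm e r q * conjSum q N r := by
  have hpair := (isBaileyPair_initial hq hq').iterate_step hq' (qPoch_mul_self_ne_zero hq') e
  rw [U_eq_sum_iterate_baileyStep hq', hpair.sum_mul]
  simp_rw [conjSum, mul_sum]
  exact sum_congr rfl fun r _ ↦ sum_congr rfl fun n hn ↦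
    alpha_mul_delta_div_eq hq' e (mem_Ico.1 hn).1

theorem U_eq_truncTheta_mul_sub (hq : q ≠ 0) (hq' : ¬IsOfFinOrder (q ^ 2)) (e N : ℕ) :
    U (e + 2) N q = truncTheta e N q * conjSum q N 0 -
      ∑ r ∈ range N, thetaTerm e r q * ∑ s ∈ range r, conjCert q N (s + 1) := by
  rw [U_eq_sum_thetaTerm_mul_conjSum hq hq', truncTheta, sum_mul, ← sum_sub_distrib]
  refine sum_congr rfl fun r hr ↦ ?_
  rw [conjSum_zero hq' (mem_range.1 hr).le]
  ring

end PartialTheta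

section Reflection

variable {A : Type*} [AddCommGroup A] [IsAddTorsionFree A]

lemma sum_range_eq_zero_of_antisymm {n : ℕ} {f : ℕ → A}
    (h : ∀ i j, i + j + 1 = n → f i = -f j) : ∑ i ∈ range n, f i = 0 := by
  have hneg : ∑ i ∈ range n, f i = -∑ i ∈ range n, f i := by
    conv_lhs => rw [← sum_range_reflect]
    rw [← sum_neg_distrib]
    refine sum_congr rfl fun i hi ↦ h _ _ ?_
    have := mem_range.1 hi
    omega
  exact self_eq_neg.1 hneg

lemma sum_range_eq_of_antisymm {r t : ℕ} {f : ℕ → A}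
    (h : ∀ i j, i + j + 1 = r + t → f i = -f j) : ∑ i ∈ range r, f i = ∑ i ∈ range t, f i := by
  have hzero := sum_range_eq_zero_of_antisymm h
  have htail : ∑ i ∈ range t, f (r + i) = -∑ i ∈ range t, f i := by
    rw [← sum_range_reflect, ← sum_neg_distrib]
    refine sum_congr rfl fun i hi ↦ h _ _ ?_
    have := mem_range.1 hi
    omega
  rw [sum_range_add, htail] at hzero
  exact add_neg_eq_zero.1 hzero

variable {ζ : ℂ} {N : ℕ}

lemma thetaTerm_reflect (hζ : ζ ^ N = 1) (e : ℕ) {r t : ℕ} (h : r + t + 1 = N) :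
    thetaTerm e r ζ = -thetaTerm e t ζ := by
  have hexp (r t : ℕ) (h : r + t + 1 = N) :
      ζ ^ thetaExp e r = ζ ^ (thetaExp e t + (2 * t + 1)) := by
    refine pow_eq_pow_of_modEq (Nat.modEq_iff_dvd.2
      ⟨4 * (e + 1) * (t + 1) - 2 * (e + 1) * N - (2 * e + 1), ?_⟩) hζ
    subst h
    simp only [thetaExp]
    push_cast
    ring
  rw [thetaTerm, thetaTerm, hexp r t h, hexp t r (by omega), neg_sub]

lemma conjCert_reflect (hN : Odd N) (hζ : ζ ^ N = 1) {s t : ℕ} (h : s + t = N) :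
    conjCert ζ N s = -conjCert ζ N t := by
  have hform (s t : ℕ) (h : s + t = N) : conjCert ζ N s = (-1) ^ t *
      (ζ ^ (t * (s + 1)) + ζ ^ (s * (t + 1))) /
        (qPoch (ζ ^ 2) (ζ ^ 2) t * qPoch (ζ ^ 2) (ζ ^ 2) s) := by
    have hbase : (ζ ^ 2) ^ (N + 1) = ζ ^ 2 := by rw [pow_succ, pow_right_comm, hζ, one_pow, one_mul]
    have hpow : ζ ^ (t * (N + s + 1)) = ζ ^ (t * (s + 1)) := by
      rw [show t * (N + s + 1) = N * t + t * (s + 1) by ring, pow_add, pow_mul, hζ, one_pow,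
        one_mul]
    have hpow' : ζ ^ (2 * s) * ζ ^ (t * (s + 1)) = ζ ^ (s * (t + 1)) := by
      rw [← pow_add, show 2 * s + t * (s + 1) = s + t + s * (t + 1) by ring, h, pow_add, hζ,
        one_mul]
    rw [conjCert, hbase, show N - s = t by omega, hpow, ← hpow']
    ring
  have hsign : (-1 : ℂ) ^ t = -(-1) ^ s := by
    have hst : (-1 : ℂ) ^ s * (-1) ^ t = -1 := by rw [← pow_add, h, hN.neg_one_pow]
    rcases neg_one_pow_eq_or ℂ s with hs | hs <;> simpa [hs] using hst
  rw [hform s t h, hform t s (by omega), hsign]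
  ring

lemma truncTheta_eq_zero (hζ : ζ ^ N = 1) (e : ℕ) : truncTheta e N ζ = 0 :=
  sum_range_eq_zero_of_antisymm fun _ _ ↦ thetaTerm_reflect hζ e

lemma sum_thetaTerm_mul_conjCert_eq_zero (hN : Odd N) (hζ : ζ ^ N = 1) (e : ℕ) :
    ∑ r ∈ range N, thetaTerm e r ζ * ∑ s ∈ range r, conjCert ζ N (s + 1) = 0 := by
  refine sum_range_eq_zero_of_antisymm fun r t h ↦ ?_
  have hcert : ∑ s ∈ range r, conjCert ζ N (s + 1) = ∑ s ∈ range t, conjCert ζ N (s + 1) :=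
    sum_range_eq_of_antisymm fun i j hij ↦ conjCert_reflect hN hζ (by omega)
  rw [hcert, thetaTerm_reflect hζ e h, neg_mul]

end Reflection

section RadialLimit

open Filter Topology

lemma tendsto_div_of_hasDerivAt {𝕜 : Type*} [NontriviallyNormedField 𝕜] {f g : 𝕜 → 𝕜}
    {a f' g' : 𝕜} (hf : HasDerivAt f f' a) (hg : HasDerivAt g g' a) (hfa : f a = 0)
    (hga : g a = 0) (hg' : g' ≠ 0) : Tendsto (fun x ↦ f x / g x) (𝓝[≠] a) (𝓝 (f' / g')) := by
  refine ((hf.tendsto_slope.div hg.tendsto_slope hg').congr' ?_)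
  filter_upwards [self_mem_nhdsWithin] with x hx
  have hx' : x - a ≠ 0 := sub_ne_zero.2 hx
  rw [Pi.div_apply, slope_def_field, slope_def_field, hfa, hga, sub_zero, sub_zero,
    div_div_div_cancel_right₀ hx']

lemma not_isOfFinOrder_sq_of_mem_ball {q : ℂ} (hq : q ∈ Metric.ball (0 : ℂ) 1) :
    ¬IsOfFinOrder (q ^ 2) := fun h ↦
  (mem_ball_zero_iff.1 hq).ne (h.of_pow two_ne_zero).norm_eq_one

@[fun_prop]
lemma differentiable_truncTheta (e N : ℕ) : Differentiable ℂ (truncTheta e N) := by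
  unfold truncTheta thetaTerm
  fun_prop

variable {ζ : ℂ} {N : ℕ}

lemma tendsto_truncTheta_div (hζ : IsPrimitiveRoot ζ N) (hN : N ≠ 0) (e : ℕ) :
    Tendsto (fun q ↦ truncTheta e N q / (1 - q ^ (2 * N))) (𝓝[≠] ζ)
      (𝓝 (-(ζ / (2 * N)) * deriv (truncTheta e N) ζ)) := by
  have hζ₀ := hζ.ne_zero hN
  have hN₀ : (N : ℂ) ≠ 0 := Nat.cast_ne_zero.2 hN
  have hζN : ζ ^ (2 * N) = 1 := by rw [mul_comm, pow_mul, hζ.pow_eq_one, one_pow]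
  have hpow : HasDerivAt (fun q : ℂ ↦ 1 - q ^ (2 * N)) (-(2 * N / ζ)) ζ := by
    have hd := (hasDerivAt_pow (2 * N) ζ).const_sub 1
    rwa [eq_div_of_mul_eq hζ₀ (pow_sub_one_mul (by omega) ζ), hζN, mul_one_div, Nat.cast_mul,
      Nat.cast_ofNat] at hd
  have hlim := tendsto_div_of_hasDerivAt (differentiable_truncTheta e N ζ).hasDerivAt hpow
    (truncTheta_eq_zero hζ.pow_eq_one e) (by rw [hζN, sub_self]) (by simp [hζ₀, hN₀])
  convert hlim using 2
  field_simp

lemma continuousAt_conjTerm (hN : Odd N) (hζ : IsPrimitiveRoot ζ N) {n : ℕ} (hn : n + 1 < N) :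
    ContinuousAt (fun q ↦ conjTerm q n 0) ζ := by
  have hω : IsPrimitiveRoot (ζ ^ 2) N := hζ.pow_of_coprime 2 hN.coprime_two_left
  unfold conjTerm
  refine ContinuousAt.div (by fun_prop) (by fun_prop)
    (mul_ne_zero (qPoch_self_ne_zero_of_isPrimitiveRoot hω (by omega)) ?_)
  rw [qPoch_succ, qPoch_zero, one_mul, pow_zero, mul_one, sub_ne_zero]
  exact (hω.pow_ne_one_of_pos_of_lt n.succ_ne_zero hn).symm

lemma tendsto_mul_conjSum (hN : Odd N) (hζ : IsPrimitiveRoot ζ N) :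
    Tendsto (fun q ↦ (1 - q ^ (2 * N)) * conjSum q N 0) (𝓝[Metric.ball 0 1] ζ) (𝓝 (1 / N)) := by
  obtain ⟨K, rfl⟩ : ∃ K, N = K + 1 := Nat.exists_eq_add_one.2 hN.pos
  have hK : Even K := by simpa [Nat.odd_add_one] using hN
  have hω : IsPrimitiveRoot (ζ ^ 2) (K + 1) := hζ.pow_of_coprime 2 hN.coprime_two_left
  have hregular : Tendsto (fun q ↦ (1 - q ^ (2 * (K + 1))) * ∑ n ∈ range K, conjTerm q n 0)
      (𝓝[Metric.ball 0 1] ζ) (𝓝 0) := by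
    have hcont : ContinuousAt
        (fun q ↦ (1 - q ^ (2 * (K + 1))) * ∑ n ∈ range K, conjTerm q n 0) ζ :=
      ContinuousAt.mul (by fun_prop) (tendsto_finsetSum _ fun n hn ↦
        continuousAt_conjTerm hN hζ (Nat.succ_lt_succ (mem_range.1 hn)))
    simpa [pow_mul, hω.pow_eq_one] using hcont.tendsto.mono_left nhdsWithin_le_nhds
  have hpole : Tendsto (fun q : ℂ ↦ q ^ (K * (K + 1)) / qPoch (q ^ 2) (q ^ 2) K)
      (𝓝[Metric.ball 0 1] ζ) (𝓝 (1 / (K + 1 : ℕ))) := by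
    have hcont : ContinuousAt (fun q : ℂ ↦ q ^ (K * (K + 1)) / qPoch (q ^ 2) (q ^ 2) K) ζ :=
      ContinuousAt.div (by fun_prop) (by fun_prop)
        (qPoch_self_ne_zero_of_isPrimitiveRoot hω K.lt_succ_self)
    simpa [mul_comm K, pow_mul, hζ.pow_eq_one, qPoch_self_of_isPrimitiveRoot hω] using
      hcont.tendsto.mono_left nhdsWithin_le_nhds
  rw [← zero_add (1 / _)]
  refine (hregular.add hpole).congr' ?_
  filter_upwards [self_mem_nhdsWithin] with q hq
  have hq' : 1 - (q ^ 2) ^ (K + 1) ≠ 0 :=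
    one_sub_pow_ne_zero (not_isOfFinOrder_sq_of_mem_ball hq) K.succ_pos
  have hlast : (1 - q ^ (2 * (K + 1))) * conjTerm q K 0 =
      q ^ (K * (K + 1)) / qPoch (q ^ 2) (q ^ 2) K := by
    simp only [conjTerm, Nat.sub_zero, hK.neg_one_pow, one_mul, qPoch_succ, qPoch_zero, pow_zero,
      mul_one, pow_mul q 2 (K + 1), add_zero]
    rw [mul_comm (qPoch _ _ _), ← div_div, mul_div_assoc', mul_div_cancel₀ _ hq']
  rw [conjSum, Nat.Ico_zero_eq_range, sum_range_succ, mul_add (1 - _), hlast]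

lemma continuousAt_conjCert (hN : Odd N) (hζ : IsPrimitiveRoot ζ N) {s : ℕ} (hs : 0 < s)
    (hsN : s < N) : ContinuousAt (fun q ↦ conjCert q N s) ζ := by
  have hω : IsPrimitiveRoot (ζ ^ 2) N := hζ.pow_of_coprime 2 hN.coprime_two_left
  unfold conjCert
  refine ContinuousAt.div (by fun_prop) (by fun_prop)
    (mul_ne_zero (qPoch_self_ne_zero_of_isPrimitiveRoot hω (by omega)) ?_)
  rw [pow_succ, hω.pow_eq_one, one_mul]
  exact qPoch_self_ne_zero_of_isPrimitiveRoot hω hsN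

lemma continuousAt_Gterm (hN : Odd N) (hζ : IsPrimitiveRoot ζ N) (m : ℕ) {n : ℕ → ℕ}
    (hn : ∀ j, n j < N) : ContinuousAt (fun q ↦ Gterm m q n) ζ := by
  have hω : IsPrimitiveRoot (ζ ^ 2) N := hζ.pow_of_coprime 2 hN.coprime_two_left
  unfold Gterm
  refine ContinuousAt.mul (ContinuousAt.div (by fun_prop) (by fun_prop)
    (qPoch_neg_self_ne_zero hN hζ.pow_eq_one _)) (tendsto_finsetProd _ fun i _ ↦ ?_)
  by_cases hi : n i ≤ n (i + 1)
  · simp only [qBinom, if_pos hi]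
    exact ContinuousAt.div (by fun_prop) (by fun_prop) (mul_ne_zero
      (qPoch_self_ne_zero_of_isPrimitiveRoot hω ((Nat.sub_le _ _).trans_lt (hn _)))
      (qPoch_self_ne_zero_of_isPrimitiveRoot hω (hn _)))
  · simp only [qBinom, if_neg hi]
    exact tendsto_const_nhds

lemma continuousAt_U (hN : Odd N) (hζ : IsPrimitiveRoot ζ N) (m : ℕ) :
    ContinuousAt (U m N) ζ := by
  refine tendsto_finsetSum _ fun g hg ↦ continuousAt_Gterm hN hζ m fun j ↦ ?_
  rw [pad]
  split_ifs with hj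
  · exact mem_range.1 (Fintype.mem_piFinset.1 hg _)
  · exact hN.pos

lemma tendsto_sum_thetaTerm_mul_conjCert (hN : Odd N) (hζ : IsPrimitiveRoot ζ N) (e : ℕ) :
    Tendsto (fun q ↦ ∑ r ∈ range N, thetaTerm e r q * ∑ s ∈ range r, conjCert q N (s + 1))
      (𝓝 ζ) (𝓝 0) := by
  rw [← sum_thetaTerm_mul_conjCert_eq_zero hN hζ.pow_eq_one e]
  refine tendsto_finsetSum _ fun r hr ↦ ContinuousAt.mul (by unfold thetaTerm; fun_prop)
    (tendsto_finsetSum _ fun s hs ↦ continuousAt_conjCert hN hζ s.succ_pos ?_)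
  have hr' := mem_range.1 hr
  have hs' := mem_range.1 hs
  omega

theorem U_eq_mul_deriv_truncTheta (hN : Odd N) (hζ : IsPrimitiveRoot ζ N) (e : ℕ) :
    U (e + 2) N ζ = -(ζ / (2 * N ^ 2)) * deriv (truncTheta e N) ζ := by
  have hnorm : ‖ζ‖ = 1 := hζ.norm'_eq_one hN.pos.ne'
  set l := 𝓝[Metric.ball 0 1] ζ
  have hl : l.NeBot := by
    rw [← mem_closure_iff_nhdsWithin_neBot, closure_ball _ one_ne_zero]
    simp [hnorm]
  have hl' : l ≤ 𝓝[≠] ζ := nhdsWithin_mono _ fun q hq h ↦ by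
    simp [Set.mem_singleton_iff.1 h, hnorm] at hq
  have hlim := (((tendsto_truncTheta_div hζ hN.pos.ne' e).mono_left hl').mul
    (tendsto_mul_conjSum hN hζ)).sub
    ((tendsto_sum_thetaTerm_mul_conjCert hN hζ e).mono_left nhdsWithin_le_nhds)
  have hU : Tendsto (U (e + 2) N) l (𝓝 (U (e + 2) N ζ)) :=
    (continuousAt_U hN hζ _).tendsto.mono_left nhdsWithin_le_nhds
  rw [tendsto_nhds_unique hU (hlim.congr' ?_)]
  · ring
  filter_upwards [self_mem_nhdsWithin,
    eventually_nhdsWithin_of_eventually_nhds (eventually_ne_nhds (hζ.ne_zero hN.pos.ne'))]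
    with q hq hq₀
  have hq' := not_isOfFinOrder_sq_of_mem_ball hq
  have hpow : 1 - q ^ (2 * N) ≠ 0 := pow_mul q 2 N ▸ one_sub_pow_ne_zero hq' hN.pos
  rw [← mul_assoc, div_mul_cancel₀ _ hpow, U_eq_truncTheta_mul_sub hq₀ hq']

end RadialLimit

section CharacterSum

lemma chiG_mul_add (e r : ℕ) {i : ℕ} (hi : i < 4 * (e + 1)) :
    chiG (e + 2) (4 * (e + 1) * r + i : ℕ) =
      (if i = 2 * e + 1 then 1 else 0) - if i = 2 * e + 3 then 1 else 0 := by
  have hmod : ((4 * (e + 1) * r + i : ℕ) : ℤ) % (4 * (((e + 2 : ℕ) : ℤ) - 1)) = i := by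
    rw [show 4 * (((e + 2 : ℕ) : ℤ) - 1) = (4 * (e + 1) : ℕ) by push_cast; ring, ← Int.natCast_mod,
      Nat.mul_add_mod, Nat.mod_eq_of_lt hi]
  rw [chiG, hmod, Int.emod_eq_of_lt (a := 2 * ((e + 2 : ℕ) : ℤ) - 3) (by omega) (by omega),
    Int.emod_eq_of_lt (a := 2 * ((e + 2 : ℕ) : ℤ) - 1) (by omega) (by omega)]
  split_ifs <;> omega

lemma sum_range_chiG_mul (e N : ℕ) (f : ℕ → ℂ) :
    ∑ k ∈ range (4 * (e + 1) * N), chiG (e + 2) k * f k =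
      ∑ r ∈ range N, (f (4 * (e + 1) * r + (2 * e + 1)) - f (4 * (e + 1) * r + (2 * e + 3))) := by
  induction N with
  | zero => simp
  | succ N ih =>
    have hperiod : ∑ i ∈ range (4 * (e + 1)),
        chiG (e + 2) (4 * (e + 1) * N + i : ℕ) * f (4 * (e + 1) * N + i) =
        f (4 * (e + 1) * N + (2 * e + 1)) - f (4 * (e + 1) * N + (2 * e + 3)) := by
      rw [sum_congr rfl fun i hi ↦ by rw [chiG_mul_add e N (mem_range.1 hi)]]
      push_cast
      simp_rw [sub_mul, ite_mul, one_mul, zero_mul]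
      rw [sum_sub_distrib, sum_ite_eq', sum_ite_eq', if_pos (mem_range.2 (by omega)),
        if_pos (mem_range.2 (by omega))]
    rw [Nat.mul_succ, sum_range_add, ih, sum_range_succ, hperiod]

lemma mul_deriv_truncTheta (e N : ℕ) (q : ℂ) :
    q * deriv (truncTheta e N) q = ∑ r ∈ range N, (thetaExp e r * q ^ thetaExp e r -
      (thetaExp e r + (2 * r + 1) : ℕ) * q ^ (thetaExp e r + (2 * r + 1))) := by
  have hpow (a : ℕ) : q * (a * q ^ (a - 1)) = a * q ^ a := by
    rcases a with _ | a
    · simp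
    · rw [Nat.add_sub_cancel, pow_succ]
      ring
  have hderiv : HasDerivAt (truncTheta e N) (∑ r ∈ range N,
      (thetaExp e r * q ^ (thetaExp e r - 1) -
        (thetaExp e r + (2 * r + 1) : ℕ) * q ^ (thetaExp e r + (2 * r + 1) - 1))) q :=
    HasDerivAt.fun_sum fun r _ ↦ (hasDerivAt_pow _ q).sub (hasDerivAt_pow _ q)
  simp only [hderiv.deriv, mul_sum, mul_sub, hpow]

-- The squares of the integers on which the character is supported are `8(e+1)a + (2e+1)²`, with
-- `a` running over the exponents of the partial theta function.
lemma sum_sq_mul_chiG_mul {e : ℕ} {c q : ℂ} {g : ℕ → ℂ}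
    (hg : ∀ k a : ℕ, k ^ 2 = 8 * (e + 1) * a + (2 * e + 1) ^ 2 → g k = c * q ^ a) (N : ℕ) :
    ∑ k ∈ range (4 * (e + 1) * N + 1), (k : ℂ) ^ 2 * chiG (e + 2) k * g k =
      c * (8 * (e + 1) * (q * deriv (truncTheta e N) q) +
        (2 * e + 1) ^ 2 * truncTheta e N q) := by
  have hlast : chiG (e + 2) (4 * (e + 1) * N : ℕ) = 0 := by
    simpa using chiG_mul_add e N (i := 0) (by omega)
  have hsum : ∑ k ∈ range (4 * (e + 1) * N), (k : ℂ) ^ 2 * chiG (e + 2) k * g k =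
      ∑ k ∈ range (4 * (e + 1) * N), chiG (e + 2) k * ((k : ℂ) ^ 2 * g k) :=
    sum_congr rfl fun _ _ ↦ by ring
  rw [sum_range_succ, hlast, Int.cast_zero, mul_zero, zero_mul, add_zero, hsum,
    sum_range_chiG_mul e N fun k ↦ (k : ℂ) ^ 2 * g k, mul_deriv_truncTheta, truncTheta, mul_sum,
    mul_sum, ← sum_add_distrib, mul_sum]
  refine sum_congr rfl fun r _ ↦ ?_
  have hpos : (4 * (e + 1) * r + (2 * e + 1)) ^ 2 =
      8 * (e + 1) * thetaExp e r + (2 * e + 1) ^ 2 := by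
    rw [thetaExp]; ring
  have hneg : (4 * (e + 1) * r + (2 * e + 3)) ^ 2 =
      8 * (e + 1) * (thetaExp e r + (2 * r + 1)) + (2 * e + 1) ^ 2 := by
    rw [thetaExp]; ring
  rw [hg _ _ hpos, hg _ _ hneg, thetaTerm, ← Nat.cast_pow, ← Nat.cast_pow, hpos, hneg]
  push_cast
  ring

lemma isPrimitiveRoot_exp_of_isCoprime {M : ℤ} {N : ℕ} (hN : N ≠ 0) (hMN : IsCoprime M (N : ℤ)) :
    IsPrimitiveRoot (Complex.exp (2 * Real.pi * Complex.I * M / N)) N := by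
  have h := (Complex.isPrimitiveRoot_exp N hN).zpow_of_gcd_eq_one M
    (Int.isCoprime_iff_gcd_eq_one.1 hMN)
  rwa [← Complex.exp_int_mul, mul_div_assoc', mul_comm (M : ℂ)] at h

lemma exp_sq_div_eq {e N k a : ℕ} (hN : N ≠ 0) (x : ℂ)
    (hk : k ^ 2 = 8 * (e + 1) * a + (2 * e + 1) ^ 2) :
    Complex.exp (x * (k : ℂ) ^ 2 / (8 * (((e + 2 : ℕ) : ℂ) - 1) * N)) =
      Complex.exp (x * (2 * ((e + 2 : ℕ) : ℂ) - 3) ^ 2 / (8 * (((e + 2 : ℕ) : ℂ) - 1) * N)) *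
        Complex.exp (x / N) ^ a := by
  have hk' : (k : ℂ) ^ 2 = 8 * (e + 1) * a + (2 * e + 1) ^ 2 := by exact_mod_cast hk
  have he : ((e + 2 : ℕ) : ℂ) - 1 = e + 1 := by push_cast; ring
  have he' : 2 * ((e + 2 : ℕ) : ℂ) - 3 = 2 * e + 1 := by push_cast; ring
  have he₀ : (e : ℂ) + 1 ≠ 0 := Nat.cast_add_one_ne_zero e
  have hN₀ : (N : ℂ) ≠ 0 := Nat.cast_ne_zero.2 hN
  rw [← Complex.exp_nat_mul, ← Complex.exp_add, hk', he, he']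
  congr 1
  field_simp
  ring

end CharacterSum

theorem stmt13 (m : ℕ) (hm : 2 ≤ m) (M : ℤ) (N : ℕ) (hN : 0 < N) (hNodd : Odd N)
    (hMN : IsCoprime M (N : ℤ)) :
    U m N (Complex.exp (2 * Real.pi * Complex.I * M / N)) =
      -(1 / (16 * ((m : ℂ) - 1) * (N : ℂ) ^ 2)) *
        Complex.exp (-(2 * Real.pi * Complex.I * M * ((2 * (m : ℂ) - 3) ^ 2) /
          (8 * ((m : ℂ) - 1) * N))) *
        ∑ k ∈ Finset.range (4 * (m - 1) * N + 1),
          (k : ℂ) ^ 2 * (chiG m k : ℂ) *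
            Complex.exp (2 * Real.pi * Complex.I * M * (k : ℂ) ^ 2 / (8 * ((m : ℂ) - 1) * N)) := by
  obtain ⟨e, rfl⟩ : ∃ e, m = e + 2 := Nat.exists_eq_add_of_le' hm
  have hζ := isPrimitiveRoot_exp_of_isCoprime hN.ne' hMN
  have hsum := sum_sq_mul_chiG_mul (e := e) (fun k a ↦ exp_sq_div_eq hN.ne'
    (2 * Real.pi * Complex.I * M)) N
  rw [show 4 * (e + 2 - 1) * N = 4 * (e + 1) * N from rfl, hsum,
    truncTheta_eq_zero hζ.pow_eq_one e, U_eq_mul_deriv_truncTheta hNodd hζ e, Complex.exp_neg]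
  have he : ((e + 2 : ℕ) : ℂ) - 1 = e + 1 := by push_cast; ring
  have he₀ : (e : ℂ) + 1 ≠ 0 := Nat.cast_add_one_ne_zero e
  have hN₀ : (N : ℂ) ≠ 0 := Nat.cast_ne_zero.2 hN.ne'
  rw [he]
  field_simp
  ring
end
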